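/- arXiv:1507.06908 — 2 statements merged into one kernel-verified Lean document; each statement's English description precedes it below -/
import Mathlib

section
/- Let G be a subgroup of PL₊(I) generated by a finite set X. The following are equivalent: (1) G is not soluble; (2) G admits a transition chain; (3) G admits a pair of element orbitals sharing exactly one endpoint (a 'one-sided overlap'); (4) G admits a tower of infinite height. -/
open Set

namespace PLPaper

/-- We model `PL₊(I)` inside the group of bijections of `ℝ` with *opposite*
composition, so that the group acts on `ℝ` on the right:
`x · (g * h) = (x · g) · h`. -/
abbrev PermR : Type := (Equiv.Perm ℝ)ᵐᵒᵖ

/-- The (right) action of `g` on the point `x`. -/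
def ap (g : PermR) (x : ℝ) : ℝ := g.unop x

/-- `g` is affine on a neighbourhood of `x`. -/
def IsLocallyAffineAt (g : PermR) (x : ℝ) : Prop :=
  ∃ m b : ℝ, ∀ᶠ y in nhds x, ap g y = m * y + b

/-- The breakpoints of `g`: points of `(0,1)` where `g` is not locally affine
(equivalently, for a PL map, where the derivative fails to exist). -/
def Breakpoints (g : PermR) : Set ℝ :=
  {x ∈ Ioo (0:ℝ) 1 | ¬ IsLocallyAffineAt g x}

/-- `g` is an orientation-preserving piecewise-linear homeomorphism of `[0,1]`
(extended by the identity to all of `ℝ`), with finitely many breakpoints. -/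
def IsPL (g : PermR) : Prop :=
  StrictMono (ap g) ∧ (∀ x ∉ Ioo (0:ℝ) 1, ap g x = x) ∧ (Breakpoints g).Finite

/-- The support of `g`. -/
def Supp (g : PermR) : Set ℝ := {x | ap g x ≠ x}

/-- `(a,b)` is an orbital of `g`, i.e. a connected component of `Supp g`. -/
def IsOrbital (g : PermR) (a b : ℝ) : Prop :=
  a < b ∧ Ioo a b ⊆ Supp g ∧ a ∉ Supp g ∧ b ∉ Supp g

/-- The support of a subgroup `G`. -/
def GSupp (G : Subgroup PermR) : Set ℝ := ⋃ g ∈ (G : Set PermR), Supp g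

/-- `(a,b)` is an orbital of the group `G`, i.e. a connected component of its support. -/
def IsGroupOrbital (G : Subgroup PermR) (a b : ℝ) : Prop :=
  a < b ∧ Ioo a b ⊆ GSupp G ∧ a ∉ GSupp G ∧ b ∉ GSupp G

/-- The pair `g, h` carries a transition chain: orbitals `(a,b)` of `g` and
`(c,d)` of `h` with `a < c < b < d`. -/
def ElemsTransitionChain (g h : PermR) : Prop :=
  ∃ a b c d : ℝ, IsOrbital g a b ∧ IsOrbital h c d ∧ a < c ∧ c < b ∧ b < d

/-- The pair `g, h` carries a one-sided overlap: orbitals `(a,b)` of `g` and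
`(a,c)` of `h`, or `(a,b)` of `g` and `(c,b)` of `h`, where `a < c < b`. -/
def ElemsOneSidedOverlap (g h : PermR) : Prop :=
  ∃ a b c : ℝ, a < c ∧ c < b ∧
    ((IsOrbital g a b ∧ IsOrbital h a c) ∨ (IsOrbital g a b ∧ IsOrbital h c b))

def AdmitsTransitionChain (G : Subgroup PermR) : Prop :=
  ∃ g ∈ G, ∃ h ∈ G, ElemsTransitionChain g h

def AdmitsOneSidedOverlap (G : Subgroup PermR) : Prop :=
  ∃ g ∈ G, ∃ h ∈ G, ElemsOneSidedOverlap g h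

/-- `G` admits a bad overlap: orbitals `A` of `f ∈ G` and `B` of `g ∈ G` which
intersect, are distinct, and neither closure is contained in the other orbital. -/
def AdmitsBadOverlap (G : Subgroup PermR) : Prop :=
  ∃ f ∈ G, ∃ g ∈ G, ∃ a b c d : ℝ, IsOrbital f a b ∧ IsOrbital g c d ∧
    (Ioo a b ∩ Ioo c d).Nonempty ∧ Ioo a b ≠ Ioo c d ∧
    ¬ Icc a b ⊆ Ioo c d ∧ ¬ Icc c d ⊆ Ioo a b

/-- A tower: a set of signed orbitals `((a,b), g)` with pairwise nested orbitals,
where equal orbitals force equal signatures. -/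
def IsTower (T : Set ((ℝ × ℝ) × PermR)) : Prop :=
  (∀ p ∈ T, IsOrbital p.2 p.1.1 p.1.2) ∧
  (∀ p ∈ T, ∀ q ∈ T,
      Ioo p.1.1 p.1.2 ⊆ Ioo q.1.1 q.1.2 ∨ Ioo q.1.1 q.1.2 ⊆ Ioo p.1.1 p.1.2) ∧
  (∀ p ∈ T, ∀ q ∈ T, p.1 = q.1 → p.2 = q.2)

/-- `G` admits the tower `T` if `T` is a tower all of whose signatures lie in `G`. -/
def AdmitsTower (G : Subgroup PermR) (T : Set ((ℝ × ℝ) × PermR)) : Prop :=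
  IsTower T ∧ ∀ p ∈ T, p.2 ∈ G

def AdmitsInfiniteTower (G : Subgroup PermR) : Prop :=
  ∃ T : Set ((ℝ × ℝ) × PermR), AdmitsTower G T ∧ T.Infinite

/-- The set of breakpoints of the elements of a set `S`. -/
def BreakSet (S : Set PermR) : Set ℝ := ⋃ g ∈ S, Breakpoints g

/-- The derived length of a group: the least `n` with `derivedSeries G n = ⊥`. -/
noncomputable def derivedLength (G : Type*) [Group G] : ℕ :=
  sInf {n : ℕ | derivedSeries G n = ⊥}

/-!
The slope of a map at a fixed point is multiplicative, so a commutator of maps fixing `a` is the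
identity just to the right of `a`. If two orbitals share their left endpoint `a` and differ in the
right one, conjugates of the shorter by powers of the longer form an infinite tower, while a
commutator provides an orbital inside `(a, b)` crossing the right endpoint of the shorter, hence a
transition chain. Conversely, if `g` and `h` carry a transition chain and `p` is the left end of the
component of the union of their supports around it, then two of `g`, `h` and `g * h` have orbitals
starting at `p` with different right ends.

If `G` has a transition chain, then each term of the derived series either has one or contains an
infinite family of orbitals growing at both ends, and commutators preserve such a family; so `G` is
not soluble.

If `G` has no transition chain, its breakpoints form finitely many orbits, since it is finitely
generated. Passing from `G` to the kernel `K` of the germ at the left end of its orbital around a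
point `x` lowers the number of orbits of breakpoints that matter near `x`; moreover `K` contains the
derived subgroup and loses at most one orbital containing `x`. After as many steps as there are
orbits of breakpoints nothing moves `x`: this bounds both the derived length and the heights of
towers.
-/

open Filter Topology
open scoped commutatorElement

section IteratedCommutator

variable {Γ : Type*} [Group Γ]

/-- The derived series of a subgroup `H`, as subgroups of the ambient group; keeping the ambient
group fixed is what allows induction on its length. -/
def iteratedCommutator (H : Subgroup Γ) : ℕ → Subgroup Γ
  | 0 => H
  | n + 1 => ⁅iteratedCommutator H n, iteratedCommutator H n⁆

theorem commutator_self_le (H : Subgroup Γ) : ⁅H, H⁆ ≤ H :=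
  Subgroup.commutator_le.2 fun _ hg _ hh ↦
    mul_mem (mul_mem (mul_mem hg hh) (inv_mem hg)) (inv_mem hh)

theorem iteratedCommutator_le (H : Subgroup Γ) : ∀ n, iteratedCommutator H n ≤ H
  | 0 => le_rfl
  | n + 1 => (commutator_self_le _).trans (iteratedCommutator_le H n)

theorem iteratedCommutator_succ_le {H K : Subgroup Γ} (hK : ⁅H, H⁆ ≤ K) :
    ∀ n, iteratedCommutator H (n + 1) ≤ iteratedCommutator K n
  | 0 => hK
  | n + 1 => Subgroup.commutator_mono (iteratedCommutator_succ_le hK n)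
      (iteratedCommutator_succ_le hK n)

theorem map_subtype_derivedSeries (H : Subgroup Γ) :
    ∀ n, (derivedSeries H n).map H.subtype = iteratedCommutator H n
  | 0 => by rw [derivedSeries_zero, ← MonoidHom.range_eq_map, H.range_subtype, iteratedCommutator]
  | n + 1 => by
    rw [derivedSeries_succ, Subgroup.map_commutator, map_subtype_derivedSeries H n,
      iteratedCommutator]

theorem isSolvable_iff_exists_iteratedCommutator_eq_bot (H : Subgroup Γ) :
    Group.IsSolvable H ↔ ∃ n, iteratedCommutator H n = ⊥ := by
  simp only [Group.isSolvable_def, ← map_subtype_derivedSeries,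
    Subgroup.map_eq_bot_iff_of_injective _ H.subtype_injective]

end IteratedCommutator

theorem exists_eqOn_affine_of_isPreconnected {f : ℝ → ℝ} {s : Set ℝ} (hs : IsPreconnected s)
    (hf : ∀ x ∈ s, ∃ m b : ℝ, ∀ᶠ y in 𝓝 x, f y = m * y + b) :
    ∃ m b : ℝ, EqOn f (fun y ↦ m * y + b) s := by
  obtain rfl | ⟨x, hx⟩ := s.eq_empty_or_nonempty
  · exact ⟨0, 0, eqOn_empty _ _⟩
  have analytic_affine (m b : ℝ) : AnalyticOnNhd ℝ (fun y ↦ m * y + b) s := fun y _ ↦ by fun_prop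
  have analytic_f : AnalyticOnNhd ℝ f s := fun y hy ↦ by
    obtain ⟨m, b, hfy⟩ := hf y hy
    exact (analytic_affine m b y hy).congr (EventuallyEq.symm hfy)
  obtain ⟨m, b, hfx⟩ := hf x hx
  exact ⟨m, b, analytic_f.eqOn_of_preconnected_of_eventuallyEq (analytic_affine m b) hs hx hfx⟩

theorem eq_self_of_affine_of_two_fixed {f : ℝ → ℝ} {m b p q : ℝ} {s : Set ℝ}
    (hf : EqOn f (fun y ↦ m * y + b) s) (hps : p ∈ s) (hqs : q ∈ s) (hpq : p ≠ q)
    (hp : f p = p) (hq : f q = q) : EqOn f id s := by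
  have hfp : m * p + b = p := (hf hps).symm.trans hp
  have hfq : m * q + b = q := (hf hqs).symm.trans hq
  obtain rfl : m = 1 := mul_right_cancel₀ (sub_ne_zero.2 hpq) (by linarith)
  intro y hy
  rw [hf hy, id]
  linarith

/-- The interval `(a, b)` is a connected component of the set `S`. Orbitals of elements and of
groups are components of their supports. -/
def IsComponent (S : Set ℝ) (a b : ℝ) : Prop :=
  a < b ∧ Ioo a b ⊆ S ∧ a ∉ S ∧ b ∉ S

namespace IsComponent

variable {S T : Set ℝ} {a b c d p : ℝ}

theorem le_left_of_notMem (h : IsComponent S a b) (hp : p ∉ S) (hpb : p < b) : p ≤ a :=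
  le_of_not_gt fun hap ↦ hp (h.2.1 ⟨hap, hpb⟩)

theorem right_le_of_notMem (h : IsComponent S a b) (hp : p ∉ S) (hap : a < p) : b ≤ p :=
  le_of_not_gt fun hpb ↦ hp (h.2.1 ⟨hap, hpb⟩)

theorem le_of_subset (hS : IsComponent S c d) (hT : IsComponent T a b) (hST : S ⊆ T)
    (had : a < d) (hcb : c < b) : a ≤ c ∧ d ≤ b :=
  ⟨hS.le_left_of_notMem (fun ha ↦ hT.2.2.1 (hST ha)) had,
    hS.right_le_of_notMem (fun hb ↦ hT.2.2.2 (hST hb)) hcb⟩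

theorem eq_of_overlap (h : IsComponent S a b) (h' : IsComponent S c d) (had : a < d)
    (hcb : c < b) : a = c ∧ b = d := by
  have hle := h'.le_of_subset h subset_rfl had hcb
  have hge := h.le_of_subset h' subset_rfl hcb had
  exact ⟨le_antisymm hle.1 hge.1, le_antisymm hge.2 hle.2⟩

theorem image {f : ℝ → ℝ} (hf : StrictMono f) (hsurj : f.Surjective)
    (hST : ∀ x, f x ∈ T ↔ x ∈ S) (h : IsComponent S a b) : IsComponent T (f a) (f b) := by
  refine ⟨hf h.1, fun y hy ↦ ?_, mt (hST a).1 h.2.2.1, mt (hST b).1 h.2.2.2⟩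
  obtain ⟨x, rfl⟩ := hsurj y
  exact (hST x).2 (h.2.1 ⟨hf.lt_iff_lt.1 hy.1, hf.lt_iff_lt.1 hy.2⟩)

end IsComponent

theorem exists_isComponent_of_isOpen {S : Set ℝ} {l u x : ℝ} (hS : IsOpen S)
    (hlu : S ⊆ Ioo l u) (hx : x ∈ S) : ∃ a b, IsComponent S a b ∧ x ∈ Ioo a b := by
  have hlx : l ∈ Sᶜ ∩ Icc l x := ⟨fun hl ↦ (hlu hl).1.false, le_rfl, (hlu hx).1.le⟩
  have hxu : u ∈ Sᶜ ∩ Icc x u := ⟨fun hu ↦ (hlu hu).2.false, (hlu hx).2.le, le_rfl⟩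
  obtain ⟨a, ⟨haS, hla, hax⟩, ha⟩ :=
    (isCompact_Icc.inter_left hS.isClosed_compl).exists_isGreatest ⟨l, hlx⟩
  obtain ⟨b, ⟨hbS, hxb, hbu⟩, hb⟩ :=
    (isCompact_Icc.inter_left hS.isClosed_compl).exists_isLeast ⟨u, hxu⟩
  have hax' : a < x := hax.lt_of_ne fun h ↦ haS (h ▸ hx)
  have hxb' : x < b := hxb.lt_of_ne fun h ↦ hbS (h ▸ hx)
  refine ⟨a, b, ⟨hax'.trans hxb', fun y hy ↦ ?_, haS, hbS⟩, hax', hxb'⟩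
  by_contra hyS
  obtain hyx | hxy := le_total y x
  · exact hy.1.not_ge (ha ⟨hyS, hla.trans hy.1.le, hyx⟩)
  · exact hy.2.not_ge (hb ⟨hyS, hxy, hy.2.le.trans hbu⟩)

section Action

variable {f g h : PermR} {G K : Subgroup PermR} {a b x y : ℝ}

theorem ap_mul (g h : PermR) (x : ℝ) : ap (g * h) x = ap h (ap g x) := rfl

theorem ap_one (x : ℝ) : ap 1 x = x := rfl

theorem ap_inv_ap (g : PermR) (x : ℝ) : ap g⁻¹ (ap g x) = x := g.unop.symm_apply_apply x

theorem ap_ap_inv (g : PermR) (x : ℝ) : ap g (ap g⁻¹ x) = x := g.unop.apply_symm_apply x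

theorem ap_injective (g : PermR) : Function.Injective (ap g) := g.unop.injective

theorem ap_surjective (g : PermR) : Function.Surjective (ap g) := g.unop.surjective

theorem ap_ext (hgh : ∀ x, ap g x = ap h x) : g = h :=
  MulOpposite.unop_injective (Equiv.ext hgh)

theorem ap_pow (g : PermR) : ∀ n : ℕ, ap (g ^ n) = (ap g)^[n]
  | 0 => rfl
  | n + 1 => by
    funext x
    rw [pow_succ, ap_mul, ap_pow g n, Function.iterate_succ_apply']

theorem ap_inv_eq_iff : ap g⁻¹ x = y ↔ x = ap g y := g.unop.symm_apply_eq

theorem ap_inv_eq_self_iff : ap g⁻¹ x = x ↔ ap g x = x := ap_inv_eq_iff.trans eq_comm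

theorem strictMono_ap_inv (hg : StrictMono (ap g)) : StrictMono (ap g⁻¹) := fun x y hxy ↦
  hg.lt_iff_lt.1 (by rwa [ap_ap_inv, ap_ap_inv])

theorem ap_inv_lt_iff (hg : StrictMono (ap g)) : ap g⁻¹ x < y ↔ x < ap g y := by
  rw [← hg.lt_iff_lt, ap_ap_inv]

theorem continuous_ap (hg : StrictMono (ap g)) : Continuous (ap g) :=
  hg.monotone.continuous_of_surjective (ap_surjective g)

theorem ap_mem_Ioo_iff (hg : StrictMono (ap g)) (ha : ap g a = a) (hb : ap g b = b) :
    ap g x ∈ Ioo a b ↔ x ∈ Ioo a b := by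
  rw [mem_Ioo, mem_Ioo, ← hg.lt_iff_lt (a := a) (b := x), ← hg.lt_iff_lt (a := x) (b := b), ha, hb]

theorem notMem_supp : x ∉ Supp g ↔ ap g x = x := not_not

theorem supp_inv (g : PermR) : Supp g⁻¹ = Supp g := Set.ext fun _ ↦ not_congr ap_inv_eq_self_iff

theorem isOpen_supp (hg : StrictMono (ap g)) : IsOpen (Supp g) :=
  isOpen_ne_fun (continuous_ap hg) continuous_id

theorem mem_gsupp : x ∈ GSupp G ↔ ∃ g ∈ G, ap g x ≠ x := by
  simp only [GSupp, Supp, mem_iUnion, SetLike.mem_coe, mem_ofPred_eq, exists_prop]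

theorem notMem_gsupp : x ∉ GSupp G ↔ ∀ g ∈ G, ap g x = x := by
  simp only [mem_gsupp, not_exists, not_and, ne_eq, not_not]

theorem supp_subset_gsupp (hg : g ∈ G) : Supp g ⊆ GSupp G := subset_biUnion_of_mem hg

theorem gsupp_mono (hKG : K ≤ G) : GSupp K ⊆ GSupp G := biUnion_subset_biUnion_left hKG

namespace IsOrbital

theorem isComponent (hg : IsOrbital g a b) : IsComponent (Supp g) a b := hg

theorem lt (hg : IsOrbital g a b) : a < b := hg.1

theorem ap_ne (hg : IsOrbital g a b) (hx : x ∈ Ioo a b) : ap g x ≠ x := hg.2.1 hx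

theorem ap_left (hg : IsOrbital g a b) : ap g a = a := notMem_supp.1 hg.2.2.1

theorem ap_right (hg : IsOrbital g a b) : ap g b = b := notMem_supp.1 hg.2.2.2

theorem inv (hg : IsOrbital g a b) : IsOrbital g⁻¹ a b := by rwa [IsOrbital, supp_inv]

theorem congr (hg : IsOrbital g a b) (hgh : EqOn (ap g) (ap h) (Icc a b)) : IsOrbital h a b :=
  ⟨hg.lt, fun _ hx ↦ (hgh (Ioo_subset_Icc_self hx)).symm.trans_ne (hg.ap_ne hx),
    notMem_supp.2 ((hgh (left_mem_Icc.2 hg.lt.le)).symm.trans hg.ap_left),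
    notMem_supp.2 ((hgh (right_mem_Icc.2 hg.lt.le)).symm.trans hg.ap_right)⟩

theorem conj (hg : IsOrbital g a b) (hf : StrictMono (ap f)) :
    IsOrbital (f⁻¹ * g * f) (ap f a) (ap f b) := by
  refine hg.isComponent.image hf (ap_surjective f) fun x ↦ not_congr ?_
  rw [ap_mul, ap_mul, ap_inv_ap, (ap_injective f).eq_iff]

end IsOrbital

namespace IsGroupOrbital

theorem isComponent (hG : IsGroupOrbital G a b) : IsComponent (GSupp G) a b := hG

theorem lt (hG : IsGroupOrbital G a b) : a < b := hG.1

theorem ap_left (hG : IsGroupOrbital G a b) (hg : g ∈ G) : ap g a = a :=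
  notMem_gsupp.1 hG.2.2.1 g hg

theorem ap_right (hG : IsGroupOrbital G a b) (hg : g ∈ G) : ap g b = b :=
  notMem_gsupp.1 hG.2.2.2 g hg

theorem conj (hK : IsGroupOrbital K a b) (hf : StrictMono (ap f))
    (hfK : f ∈ Subgroup.normalizer (K : Set PermR)) : IsGroupOrbital K (ap f a) (ap f b) := by
  refine hK.isComponent.image hf (ap_surjective f) fun x ↦ ?_
  simp only [mem_gsupp]
  constructor
  · rintro ⟨k, hk, hkx⟩
    refine ⟨f * k * f⁻¹, (Subgroup.mem_normalizer_iff.1 hfK k).1 hk, ?_⟩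
    rwa [ap_mul, ap_mul, Ne, ap_inv_eq_iff]
  · rintro ⟨k, hk, hkx⟩
    refine ⟨f⁻¹ * k * f, (Subgroup.mem_normalizer_iff''.1 hfK k).1 hk, ?_⟩
    rwa [ap_mul, ap_mul, ap_inv_ap, (ap_injective f).ne_iff]

end IsGroupOrbital

namespace IsPL

theorem strictMono (hg : IsPL g) : StrictMono (ap g) := hg.1

theorem supp_subset (hg : IsPL g) : Supp g ⊆ Ioo 0 1 := fun x hx ↦
  of_not_not fun hx' ↦ hx (hg.2.1 x hx')

theorem exists_isOrbital (hg : IsPL g) (hx : ap g x ≠ x) :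
    ∃ a b, IsOrbital g a b ∧ x ∈ Ioo a b :=
  exists_isComponent_of_isOpen (isOpen_supp hg.strictMono) hg.supp_subset hx

end IsPL

theorem IsOrbital.bounds (horb : IsOrbital g a b) (hg : IsPL g) : 0 ≤ a ∧ b ≤ 1 :=
  (Ioo_subset_Ioo_iff horb.lt).1 (horb.2.1.trans hg.supp_subset)

/-- Every element of `G` is piecewise linear: `G` is a subgroup of `PL₊(I)`. -/
def IsPLGroup (G : Subgroup PermR) : Prop := ∀ g ∈ G, IsPL g

namespace IsPLGroup

theorem mono (hG : IsPLGroup G) (hKG : K ≤ G) : IsPLGroup K := fun g hg ↦ hG g (hKG hg)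

theorem isOpen_gsupp (hG : IsPLGroup G) : IsOpen (GSupp G) :=
  isOpen_biUnion fun g hg ↦ isOpen_supp (hG g hg).strictMono

theorem gsupp_subset (hG : IsPLGroup G) : GSupp G ⊆ Ioo 0 1 :=
  iUnion₂_subset fun g hg ↦ (hG g hg).supp_subset

theorem exists_isGroupOrbital (hG : IsPLGroup G) (hx : x ∈ GSupp G) :
    ∃ a b, IsGroupOrbital G a b ∧ x ∈ Ioo a b :=
  exists_isComponent_of_isOpen hG.isOpen_gsupp hG.gsupp_subset hx

end IsPLGroup

theorem IsGroupOrbital.bounds (horb : IsGroupOrbital G a b) (hG : IsPLGroup G) : 0 ≤ a ∧ b ≤ 1 :=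
  (Ioo_subset_Ioo_iff horb.lt).1 (horb.2.1.trans hG.gsupp_subset)

end Action

section PiecewiseLinear

variable {g h : PermR} {p q x y a b : ℝ}

theorem IsPL.finite_setOf_not_isLocallyAffineAt (hg : IsPL g) :
    {x | ¬ IsLocallyAffineAt g x}.Finite := by
  refine (hg.2.2.union (toFinite {0, 1})).subset fun x hx ↦ ?_
  have affine_of_eventually (hout : ∀ᶠ y in 𝓝 x, y ∉ Ioo (0 : ℝ) 1) : IsLocallyAffineAt g x :=
    ⟨1, 0, by filter_upwards [hout] with y hy; rw [hg.2.1 y hy]; ring⟩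
  by_cases hx01 : x ∈ Icc (0 : ℝ) 1
  · by_cases hx01' : x ∈ Ioo (0 : ℝ) 1
    · exact Or.inl ⟨hx01', hx⟩
    · rw [← Icc_sdiff_Ioo_same zero_le_one]
      exact Or.inr ⟨hx01, hx01'⟩
  · refine absurd (affine_of_eventually ?_) hx
    filter_upwards [isClosed_Icc.isOpen_compl.mem_nhds hx01] with y hy
    exact fun hy' ↦ hy (Ioo_subset_Icc_self hy')

theorem exists_eqOn_affine_Icc (hg : StrictMono (ap g)) (hxy : x < y)
    (haff : ∀ z ∈ Ioo x y, IsLocallyAffineAt g z) :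
    ∃ m b : ℝ, EqOn (ap g) (fun z ↦ m * z + b) (Icc x y) := by
  obtain ⟨m, b, hmb⟩ := exists_eqOn_affine_of_isPreconnected isPreconnected_Ioo haff
  refine ⟨m, b, ?_⟩
  rw [← closure_Ioo hxy.ne]
  exact hmb.closure (continuous_ap hg) (by fun_prop)

theorem eqOn_id_of_isLocallyAffineAt_of_two_fixed (hg : StrictMono (ap g)) (hxy : x < y)
    (haff : ∀ z ∈ Ioo x y, IsLocallyAffineAt g z) (hp : p ∈ Icc x y) (hq : q ∈ Icc x y)
    (hpq : p ≠ q) (hgp : ap g p = p) (hgq : ap g q = q) : EqOn (ap g) id (Icc x y) := by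
  obtain ⟨m, b, hmb⟩ := exists_eqOn_affine_Icc hg hxy haff
  exact eq_self_of_affine_of_two_fixed hmb hp hq hpq hgp hgq

theorem IsPL.exists_affine_right (hg : IsPL g) (p : ℝ) :
    ∃ u > p, ∀ z ∈ Ioo p u, IsLocallyAffineAt g z := by
  have hfin : ∀ᶠ z in 𝓝[>] p, IsLocallyAffineAt g z := by
    filter_upwards [nhdsGT_le_nhdsNE p
      (nhdsNE_le_cofinite p hg.finite_setOf_not_isLocallyAffineAt.compl_mem_cofinite)] with z hz
    exact not_not.1 hz
  exact mem_nhdsGT_iff_exists_Ioo_subset.1 hfin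

theorem IsOrbital.exists_breakpoint (horb : IsOrbital g a b) (hg : IsPL g) :
    ∃ p ∈ Breakpoints g, p ∈ Ioo a b := by
  by_contra! hno
  have haff : ∀ z ∈ Ioo a b, IsLocallyAffineAt g z := fun z hz ↦
    of_not_not fun hz' ↦ hno z ⟨hg.supp_subset (horb.2.1 hz), hz'⟩ hz
  have hid := eqOn_id_of_isLocallyAffineAt_of_two_fixed hg.strictMono horb.lt haff
    (left_mem_Icc.2 horb.lt.le) (right_mem_Icc.2 horb.lt.le) horb.lt.ne horb.ap_left horb.ap_right
  obtain ⟨x, hx⟩ := nonempty_Ioo.2 horb.lt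
  exact horb.ap_ne hx (hid (Ioo_subset_Icc_self hx))

theorem IsPL.finite_left_endpoints (hg : IsPL g) : {p | ∃ q, IsOrbital g p q}.Finite := by
  choose! q hq using fun p (hp : ∃ q, IsOrbital g p q) ↦ hp
  choose! r hrbreak hr using fun p hp ↦ (hq p hp).exists_breakpoint hg
  refine Finite.of_injOn (f := r) hrbreak (fun p hp p' hp' hrr ↦ ?_) hg.2.2
  have hr' := hr p' hp'
  rw [← hrr] at hr'
  exact ((hq p hp).isComponent.eq_of_overlap (hq p' hp').isComponent
    ((hr p hp).1.trans hr'.2) (hr'.1.trans (hr p hp).2)).1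

theorem IsOrbital.exists_isOrbital_left (horb : IsOrbital g p q) (hg : IsPL g) (h0 : 0 < p)
    (hp : p ∉ Breakpoints g) : ∃ e, IsOrbital g e p := by
  have hp01 : p ∈ Ioo (0 : ℝ) 1 := ⟨h0, horb.lt.trans_le (horb.bounds hg).2⟩
  have hpaff : IsLocallyAffineAt g p := of_not_not fun hp' ↦ hp ⟨hp01, hp'⟩
  obtain ⟨m, b, hmb⟩ := hpaff
  obtain ⟨l, u, ⟨hlp, hpu⟩, hlu⟩ := mem_nhds_iff_exists_Ioo_subset.1 hmb
  have hfixed : ∀ z ∈ Ioo l p, ap g z ≠ z := fun z hz hgz ↦ by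
    have hid := eq_self_of_affine_of_two_fixed (fun y hy ↦ hlu hy) ⟨hlp, hpu⟩
      ⟨hz.1, hz.2.trans hpu⟩ hz.2.ne' horb.ap_left hgz
    obtain ⟨w, hpw, hw⟩ := exists_between (lt_min hpu horb.lt)
    exact horb.ap_ne ⟨hpw, (lt_min_iff.1 hw).2⟩ (hid ⟨hlp.trans hpw, (lt_min_iff.1 hw).1⟩)
  obtain ⟨x, hx⟩ := nonempty_Ioo.2 hlp
  obtain ⟨e, f, hef, hxef⟩ := hg.exists_isOrbital (hfixed x hx)
  have hfp : f ≤ p := hef.isComponent.right_le_of_notMem horb.2.2.1 (hxef.1.trans hx.2)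
  obtain rfl : f = p := hfp.eq_of_not_lt fun hfp' ↦
    hfixed f ⟨hx.1.trans hxef.2, hfp'⟩ hef.ap_right
  exact ⟨e, hef⟩

/-- The bijections that are the identity on some interval `(p, u)`. On a group of piecewise
linear maps fixing `p`, it is the kernel of the slope at `p` from the right. -/
def rightGermKernel (p : ℝ) : Subgroup PermR where
  carrier := {g | ∀ᶠ y in 𝓝[>] p, ap g y = y}
  one_mem' := by
    rw [mem_ofPred_eq]
    filter_upwards with y using ap_one y
  mul_mem' hg hh := by
    rw [mem_ofPred_eq] at hg hh ⊢
    filter_upwards [hg, hh] with y hgy hhy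
    rw [ap_mul, hgy, hhy]
  inv_mem' hg := by
    rw [mem_ofPred_eq] at hg ⊢
    filter_upwards [hg] with y hgy
    exact ap_inv_eq_self_iff.2 hgy

theorem mem_rightGermKernel_iff : g ∈ rightGermKernel p ↔ ∃ u > p, ∀ y ∈ Ioo p u, ap g y = y :=
  mem_nhdsGT_iff_exists_Ioo_subset

theorem IsOrbital.notMem_rightGermKernel (horb : IsOrbital g p q) : g ∉ rightGermKernel p := by
  intro hg
  obtain ⟨u, hpu, hu⟩ := mem_rightGermKernel_iff.1 hg
  obtain ⟨x, hpx, hx⟩ := exists_between (lt_min hpu horb.lt)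
  exact horb.ap_ne ⟨hpx, (lt_min_iff.1 hx).2⟩ (hu x ⟨hpx, (lt_min_iff.1 hx).1⟩)

theorem IsPL.exists_isOrbital_of_notMem_rightGermKernel (hg : IsPL g) (hp : ap g p = p)
    (hgp : g ∉ rightGermKernel p) : ∃ e, IsOrbital g p e := by
  obtain ⟨u, hpu, haff⟩ := hg.exists_affine_right p
  have hmoves : ∀ z ∈ Ioc p u, ap g z ≠ z := fun z hz hgz ↦ hgp <|
    mem_rightGermKernel_iff.2 ⟨u, hpu, fun y hy ↦
      eqOn_id_of_isLocallyAffineAt_of_two_fixed hg.strictMono hpu haff (left_mem_Icc.2 hpu.le)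
        (Ioc_subset_Icc_self hz) hz.1.ne hp hgz (Ioo_subset_Icc_self hy)⟩
  obtain ⟨l, e, hle, hu⟩ := hg.exists_isOrbital (hmoves u (right_mem_Ioc.2 hpu))
  have hpl : p ≤ l := hle.isComponent.le_left_of_notMem (notMem_supp.2 hp) (hpu.trans hu.2)
  obtain rfl : p = l := hpl.eq_of_not_lt fun hpl' ↦ hmoves l ⟨hpl', hu.1.le⟩ hle.ap_left
  exact ⟨e, hle⟩

theorem IsOrbital.lt_left_of_mem_rightGermKernel (horb : IsOrbital g x y) (ha : ap g a = a)
    (hga : g ∈ rightGermKernel a) (hay : a < y) : a < x := by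
  refine (horb.isComponent.le_left_of_notMem (notMem_supp.2 ha) hay).lt_of_ne ?_
  rintro rfl
  exact horb.notMem_rightGermKernel hga

theorem IsPL.commutator_mem_rightGermKernel (hg : IsPL g) (hh : IsPL h) (hgp : ap g p = p)
    (hhp : ap h p = p) : ⁅g, h⁆ ∈ rightGermKernel p := by
  have affine_germ {f : PermR} (hf : IsPL f) (hfp : ap f p = p) :
      ∃ m : ℝ, ∀ᶠ y in 𝓝[>] p, ap f y = p + m * (y - p) := by
    obtain ⟨u, hpu, haff⟩ := hf.exists_affine_right p
    obtain ⟨m, b, hmb⟩ := exists_eqOn_affine_Icc hf.strictMono hpu haff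
    have hpmb : ap f p = m * p + b := hmb (left_mem_Icc.2 hpu.le)
    refine ⟨m, ?_⟩
    filter_upwards [Ioo_mem_nhdsGT hpu] with y hy
    rw [hmb (Ioo_subset_Icc_self hy)]
    linarith
  have tendsto_germ {f : PermR} (hf : IsPL f) (hfp : ap f p = p) :
      Tendsto (ap f) (𝓝[>] p) (𝓝[>] p) := by
    have htendsto : Tendsto (ap f) (𝓝[>] p) (𝓝[>] ap f p) :=
      (continuous_ap hf.strictMono).continuousWithinAt.tendsto_nhdsWithin
        fun y hy ↦ hf.strictMono hy
    rwa [hfp] at htendsto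
  obtain ⟨m, hm⟩ := affine_germ hg hgp
  obtain ⟨n, hn⟩ := affine_germ hh hhp
  change ∀ᶠ y in 𝓝[>] p, ap ⁅g, h⁆ y = y
  filter_upwards [hm, hn, (tendsto_germ hg hgp).eventually hn,
    (tendsto_germ hh hhp).eventually hm] with y hgy hhy hhgy hghy
  rw [commutatorElement_def, mul_assoc, ← mul_inv_rev, ap_mul, ap_inv_eq_iff, ap_mul, ap_mul,
    hhgy, hghy, hgy, hhy]
  ring

end PiecewiseLinear

section Contraction

variable {g s : PermR} {G : Subgroup PermR} {a b x : ℝ}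

/-- `s` is increasing, has the orbital `(a, b)` and moves its points towards `a`. -/
structure IsContraction (s : PermR) (a b : ℝ) : Prop where
  strictMono : StrictMono (ap s)
  isOrbital : IsOrbital s a b
  ap_lt : ∀ z ∈ Ioo a b, ap s z < z

theorem IsOrbital.isContraction_or_inv (horb : IsOrbital g a b) (hg : StrictMono (ap g)) :
    IsContraction g a b ∨ IsContraction g⁻¹ a b := by
  by_cases hlt : ∀ z ∈ Ioo a b, ap g z < z
  · exact Or.inl ⟨hg, horb, hlt⟩
  · push Not at hlt
    obtain ⟨w, hw, hgw⟩ := hlt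
    refine Or.inr ⟨strictMono_ap_inv hg, horb.inv, fun z hz ↦ (ap_inv_lt_iff hg).2 ?_⟩
    by_contra! hgz
    obtain ⟨x, hx, hgx⟩ := isPreconnected_Ioo.intermediate_value₂ hz hw
      (continuous_ap hg).continuousOn continuousOn_id hgz hgw
    exact horb.ap_ne hx hgx

theorem IsPLGroup.exists_isContraction (hG : IsPLGroup G) (hg : g ∈ G) (horb : IsOrbital g a b) :
    ∃ s ∈ G, IsContraction s a b :=
  (horb.isContraction_or_inv (hG g hg).strictMono).elim (fun hs ↦ ⟨g, hg, hs⟩)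
    fun hs ↦ ⟨g⁻¹, inv_mem hg, hs⟩

namespace IsContraction

theorem strictMono_pow (hs : IsContraction s a b) (n : ℕ) : StrictMono (ap (s ^ n)) := by
  rw [ap_pow]
  exact hs.strictMono.iterate n

theorem ap_pow_left (hs : IsContraction s a b) (n : ℕ) : ap (s ^ n) a = a := by
  rw [ap_pow]
  exact Function.iterate_fixed hs.isOrbital.ap_left n

theorem ap_pow_right (hs : IsContraction s a b) (n : ℕ) : ap (s ^ n) b = b := by
  rw [ap_pow]
  exact Function.iterate_fixed hs.isOrbital.ap_right n

theorem ap_pow_mem (hs : IsContraction s a b) (hx : x ∈ Ioo a b) (n : ℕ) :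
    ap (s ^ n) x ∈ Ioo a b :=
  (ap_mem_Ioo_iff (hs.strictMono_pow n) (hs.ap_pow_left n) (hs.ap_pow_right n)).2 hx

theorem strictAnti (hs : IsContraction s a b) (hx : x ∈ Ioo a b) :
    StrictAnti fun n ↦ ap (s ^ n) x := by
  refine strictAnti_nat_of_succ_lt fun n ↦ ?_
  rw [pow_succ, ap_mul]
  exact hs.ap_lt _ (hs.ap_pow_mem hx n)

theorem tendsto (hs : IsContraction s a b) (hx : x ∈ Ioo a b) :
    Tendsto (fun n ↦ ap (s ^ n) x) atTop (𝓝 a) := by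
  have hbdd : BddBelow (range fun n ↦ ap (s ^ n) x) :=
    ⟨a, forall_mem_range.2 fun n ↦ (hs.ap_pow_mem hx n).1.le⟩
  have hlim := tendsto_atTop_ciInf (hs.strictAnti hx).antitone hbdd
  set l := ⨅ n, ap (s ^ n) x
  have hfixed : ap s l = l := isFixedPt_of_tendsto_iterate (by simpa only [ap_pow] using hlim)
    (continuous_ap hs.strictMono).continuousAt
  have hal : a ≤ l := le_ciInf fun n ↦ (hs.ap_pow_mem hx n).1.le
  have hlb : l < b := (ciInf_le hbdd 0).trans_lt hx.2
  have hla := hs.isOrbital.isComponent.le_left_of_notMem (notMem_supp.2 hfixed) hlb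
  rwa [← hla.antisymm hal]

end IsContraction

end Contraction

section Overlap

variable {g h : PermR} {G : Subgroup PermR} {a b c p q y z : ℝ}

/-- Two elements of `G` have orbitals with the same left endpoint and different right ones. -/
def AdmitsLeftOverlap (G : Subgroup PermR) : Prop :=
  ∃ g ∈ G, ∃ h ∈ G, ∃ a b c : ℝ, c < b ∧ IsOrbital g a b ∧ IsOrbital h a c

theorem AdmitsLeftOverlap.of_ne (hg : g ∈ G) (hh : h ∈ G) (hgorb : IsOrbital g a b)
    (hhorb : IsOrbital h a c) (hbc : b ≠ c) : AdmitsLeftOverlap G :=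
  hbc.lt_or_gt.elim (fun hlt ↦ ⟨h, hh, g, hg, a, c, b, hlt, hhorb, hgorb⟩)
    fun hlt ↦ ⟨g, hg, h, hh, a, b, c, hlt, hgorb, hhorb⟩

theorem AdmitsLeftOverlap.admitsOneSidedOverlap (hG : AdmitsLeftOverlap G) :
    AdmitsOneSidedOverlap G := by
  obtain ⟨g, hg, h, hh, a, b, c, hcb, hgorb, hhorb⟩ := hG
  exact ⟨g, hg, h, hh, a, b, c, hhorb.lt, hcb, Or.inl ⟨hgorb, hhorb⟩⟩

theorem admitsLeftOverlap_of_notMem_rightGermKernel (hG : IsPLGroup G) (hg : g ∈ G) (hh : h ∈ G)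
    (hcomp : IsComponent (Supp g ∪ Supp h) p q) (hgp : g ∉ rightGermKernel p)
    (hy : y ∈ Ioo p q) (hgy : ap g y = y) : AdmitsLeftOverlap G := by
  have hp : ap g p = p ∧ ap h p = p := by simpa [notMem_supp] using hcomp.2.2.1
  obtain ⟨e, he⟩ := (hG g hg).exists_isOrbital_of_notMem_rightGermKernel hp.1 hgp
  have hey : e ≤ y := he.isComponent.right_le_of_notMem (notMem_supp.2 hgy) hy.1
  have hhe : ap h e ≠ e :=
    (hcomp.2.1 ⟨he.lt, hey.trans_lt hy.2⟩).resolve_left (notMem_supp.2 he.ap_right)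
  obtain ⟨f, hf, hfp, hfp', hfe⟩ :
      ∃ f ∈ G, ap f p = p ∧ f ∉ rightGermKernel p ∧ ap f e ≠ e := by
    by_cases hhp : h ∈ rightGermKernel p
    · refine ⟨g * h, mul_mem hg hh, by rw [ap_mul, hp.1, hp.2],
        fun hgh ↦ hgp ((mul_mem_cancel_right hhp).1 hgh), by rwa [ap_mul, he.ap_right]⟩
    · exact ⟨h, hh, hp.2, hhp, hhe⟩
  obtain ⟨e', he'⟩ := (hG f hf).exists_isOrbital_of_notMem_rightGermKernel hfp hfp'
  exact .of_ne hg hf he he' fun hee' ↦ hfe (hee' ▸ he'.ap_right)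

theorem admitsLeftOverlap_of_isComponent_union (hG : IsPLGroup G) (hg : g ∈ G) (hh : h ∈ G)
    (hcomp : IsComponent (Supp g ∪ Supp h) p q) (hy : y ∈ Ioo p q) (hgy : ap g y = y)
    (hz : z ∈ Ioo p q) (hhz : ap h z = z) : AdmitsLeftOverlap G := by
  by_cases hgp : g ∈ rightGermKernel p
  · refine admitsLeftOverlap_of_notMem_rightGermKernel hG hh hg (union_comm _ _ ▸ hcomp)
      (fun hhp ↦ ?_) hz hhz
    obtain ⟨u, hpu, hu⟩ := mem_rightGermKernel_iff.1 hgp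
    obtain ⟨v, hpv, hv⟩ := mem_rightGermKernel_iff.1 hhp
    obtain ⟨x, hpx, hx⟩ := exists_between (lt_min (lt_min hpu hpv) hcomp.1)
    simp only [lt_min_iff] at hx
    exact (hcomp.2.1 ⟨hpx, hx.2⟩).elim (fun hgx ↦ hgx (hu x ⟨hpx, hx.1.1⟩))
      fun hhx ↦ hhx (hv x ⟨hpx, hx.1.2⟩)
  · exact admitsLeftOverlap_of_notMem_rightGermKernel hG hg hh hcomp hgp hy hgy

theorem admitsLeftOverlap_of_transitionChain (hG : IsPLGroup G)
    (hchain : AdmitsTransitionChain G) : AdmitsLeftOverlap G := by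
  obtain ⟨g, hg, h, hh, a, b, c, d, hgorb, hhorb, hac, hcb, hbd⟩ := hchain
  obtain ⟨p, q, hpq, hb⟩ : ∃ p q, IsComponent (Supp g ∪ Supp h) p q ∧ b ∈ Ioo p q :=
    exists_isComponent_of_isOpen
      ((isOpen_supp (hG g hg).strictMono).union (isOpen_supp (hG h hh).strictMono))
      (union_subset (hG g hg).supp_subset (hG h hh).supp_subset) (Or.inr (hhorb.2.1 ⟨hcb, hbd⟩))
  have hpa : p ≤ a := hgorb.isComponent.le_left_of_notMem (fun hp ↦ hpq.2.2.1 (Or.inl hp)) hb.1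
  exact admitsLeftOverlap_of_isComponent_union hG hg hh hpq hb hgorb.ap_right
    ⟨hpa.trans_lt hac, hcb.trans hb.2⟩ hhorb.ap_left

/-- A commutator of maps fixing `a` is the identity near `a`, so its orbital around `c`, a point it
moves, stops short of `a`. -/
theorem exists_commutator_isOrbital_of_overlap (hG : IsPLGroup G) (hg : g ∈ G) (hh : h ∈ G)
    (hgorb : IsOrbital g a b) (hhorb : IsOrbital h a c) (hcb : c < b) :
    ∃ k ∈ ⁅G, G⁆, ∃ x y, IsOrbital k x y ∧ x ∈ Ioo a c ∧ c < y := by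
  obtain ⟨s, hsG, hs⟩ := hG.exists_isContraction hg hgorb
  have hc : c ∈ Ioo a b := ⟨hhorb.lt, hcb⟩
  have hsc : ap s c ∈ Ioo a c :=
    ⟨((ap_mem_Ioo_iff hs.strictMono hs.isOrbital.ap_left hs.isOrbital.ap_right).2 hc).1,
      hs.ap_lt c hc⟩
  have hk : ⁅h, s⁆ ∈ ⁅G, G⁆ := Subgroup.commutator_mem_commutator hh hsG
  have hkPL : IsPL ⁅h, s⁆ := hG _ (commutator_self_le G hk)
  have hkc : ap ⁅h, s⁆ c ≠ c := fun hkc ↦ hhorb.ap_ne hsc <| by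
    rw [commutatorElement_def, ap_mul, ap_mul, ap_mul, ap_inv_eq_iff, ap_inv_eq_iff,
      hhorb.ap_right] at hkc
    exact hkc.symm
  obtain ⟨x, y, hxy, hxc⟩ := hkPL.exists_isOrbital hkc
  have hka : ap ⁅h, s⁆ a = a := by
    simp only [commutatorElement_def, ap_mul, hhorb.ap_left, hs.isOrbital.ap_left,
      ap_inv_eq_self_iff.2 hhorb.ap_left, ap_inv_eq_self_iff.2 hs.isOrbital.ap_left]
  have hker := (hG h hh).commutator_mem_rightGermKernel (hG s hsG) hhorb.ap_left
    hs.isOrbital.ap_left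
  exact ⟨_, hk, x, y, hxy,
    ⟨hxy.lt_left_of_mem_rightGermKernel hka hker (hhorb.lt.trans hxc.2), hxc.1⟩, hxc.2⟩

theorem AdmitsLeftOverlap.admitsTransitionChain (hG : IsPLGroup G) (hover : AdmitsLeftOverlap G) :
    AdmitsTransitionChain G := by
  obtain ⟨g, hg, h, hh, a, b, c, hcb, hgorb, hhorb⟩ := hover
  obtain ⟨k, hk, x, y, hxy, hx, hcy⟩ :=
    exists_commutator_isOrbital_of_overlap hG hg hh hgorb hhorb hcb
  exact ⟨h, hh, k, commutator_self_le G hk, a, c, x, y, hhorb, hxy, hx.1, hx.2, hcy⟩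

theorem AdmitsLeftOverlap.admitsInfiniteTower (hG : IsPLGroup G) (hover : AdmitsLeftOverlap G) :
    AdmitsInfiniteTower G := by
  obtain ⟨g, hg, h, hh, a, b, c, hcb, hgorb, hhorb⟩ := hover
  obtain ⟨s, hsG, hs⟩ := hG.exists_isContraction hg hgorb
  have hanti : StrictAnti fun n ↦ ap (s ^ n) c := hs.strictAnti ⟨hhorb.lt, hcb⟩
  let signed (n : ℕ) : (ℝ × ℝ) × PermR := ((a, ap (s ^ n) c), (s ^ n)⁻¹ * h * s ^ n)
  have horb (n : ℕ) : IsOrbital (signed n).2 a (ap (s ^ n) c) := by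
    simpa only [hs.ap_pow_left] using hhorb.conj (hs.strictMono_pow n)
  have hinj : Function.Injective fun n ↦ (signed n).1 := fun m n hmn ↦
    hanti.injective (congrArg Prod.snd hmn)
  refine ⟨range signed, ⟨⟨forall_mem_range.2 horb, ?_, ?_⟩, forall_mem_range.2 fun n ↦ ?_⟩,
    infinite_range_of_injective hinj.of_comp⟩
  · rintro _ ⟨m, rfl⟩ _ ⟨n, rfl⟩
    exact (le_total m n).symm.imp (fun hnm ↦ Ioo_subset_Ioo_right (hanti.antitone hnm))
      fun hmn ↦ Ioo_subset_Ioo_right (hanti.antitone hmn)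
  · rintro _ ⟨m, rfl⟩ _ ⟨n, rfl⟩ hmn
    rw [hinj hmn]
  · have hsn : s ^ n ∈ G := pow_mem hsG n
    exact mul_mem (mul_mem (inv_mem hsn) hh) hsn

end Overlap

section Reflection

variable {g : PermR} {G : Subgroup PermR} {a b x : ℝ}

/-- Conjugation by the reflection `x ↦ 1 - x`, exchanging left and right endpoints of orbitals. -/
def reflect : PermR ≃* PermR := MulAut.conj (MulOpposite.op (Equiv.subLeft 1))

theorem ap_reflect (g : PermR) (x : ℝ) : ap (reflect g) x = 1 - ap g (1 - x) := by
  simp [reflect, ap, sub_eq_neg_add]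

theorem reflect_reflect (g : PermR) : reflect (reflect g) = g := ap_ext fun x ↦ by
  rw [ap_reflect, ap_reflect, sub_sub_cancel, sub_sub_cancel]

theorem IsLocallyAffineAt.reflect (hg : IsLocallyAffineAt g (1 - x)) :
    IsLocallyAffineAt (reflect g) x := by
  obtain ⟨m, b, hmb⟩ := hg
  refine ⟨m, 1 - m - b, ?_⟩
  filter_upwards [(continuous_sub_left 1).continuousAt.eventually hmb] with y hy
  rw [ap_reflect, hy]
  ring

theorem IsPL.reflect (hg : IsPL g) : IsPL (reflect g) := by
  refine ⟨fun x y hxy ↦ ?_, fun x hx ↦ ?_, ?_⟩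
  · rw [ap_reflect, ap_reflect]
    exact sub_lt_sub_left (hg.strictMono (sub_lt_sub_left hxy 1)) 1
  · rw [ap_reflect, hg.2.1, sub_sub_cancel]
    rintro ⟨h0, h1⟩
    exact hx ⟨by linarith, by linarith⟩
  · refine (hg.2.2.preimage (sub_right_injective (b := (1 : ℝ))).injOn).subset fun x hx ↦ ?_
    exact ⟨⟨by linarith [hx.1.2], by linarith [hx.1.1]⟩, fun haff ↦ hx.2 haff.reflect⟩

theorem IsOrbital.reflect (hg : IsOrbital g a b) : IsOrbital (reflect g) (1 - b) (1 - a) := by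
  refine ⟨sub_lt_sub_left hg.lt 1, fun x hx hgx ↦ ?_, ?_, ?_⟩
  · rw [ap_reflect] at hgx
    exact hg.ap_ne (x := 1 - x) ⟨by linarith [hx.2], by linarith [hx.1]⟩ (by linarith)
  · rw [notMem_supp, ap_reflect, sub_sub_cancel, hg.ap_right]
  · rw [notMem_supp, ap_reflect, sub_sub_cancel, hg.ap_left]

theorem AdmitsTransitionChain.of_map_reflect
    (hchain : AdmitsTransitionChain (G.map reflect.toMonoidHom)) : AdmitsTransitionChain G := by
  obtain ⟨_, ⟨g, hg, rfl⟩, _, ⟨h, hh, rfl⟩, a, b, c, d, hgorb, hhorb, hac, hcb, hbd⟩ := hchain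
  refine ⟨h, hh, g, hg, 1 - d, 1 - c, 1 - b, 1 - a, ?_, ?_, by linarith, by linarith, by linarith⟩
  · simpa only [MulEquiv.toMonoidHom_eq_coe, MonoidHom.coe_coe, reflect_reflect]
      using hhorb.reflect
  · simpa only [MulEquiv.toMonoidHom_eq_coe, MonoidHom.coe_coe, reflect_reflect]
      using hgorb.reflect

theorem AdmitsOneSidedOverlap.admitsTransitionChain (hG : IsPLGroup G)
    (hover : AdmitsOneSidedOverlap G) : AdmitsTransitionChain G := by
  obtain ⟨g, hg, h, hh, a, b, c, hac, hcb, ⟨hgorb, hhorb⟩ | ⟨hgorb, hhorb⟩⟩ := hover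
  · exact AdmitsLeftOverlap.admitsTransitionChain hG ⟨g, hg, h, hh, a, b, c, hcb, hgorb, hhorb⟩
  · refine .of_map_reflect (AdmitsLeftOverlap.admitsTransitionChain ?_
      ⟨_, Subgroup.mem_map_of_mem _ hg, _, Subgroup.mem_map_of_mem _ hh,
        1 - b, 1 - a, 1 - c, sub_lt_sub_left hac 1, hgorb.reflect, hhorb.reflect⟩)
    rintro _ ⟨k, hk, rfl⟩
    exact (hG k hk).reflect

end Reflection

section ChainFree

variable {g h t : PermR} {G K : Subgroup PermR} {a b c d y : ℝ}

theorem AdmitsTransitionChain.mono (hKG : K ≤ G) (hK : AdmitsTransitionChain K) :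
    AdmitsTransitionChain G := by
  obtain ⟨g, hg, h, hh, hgh⟩ := hK
  exact ⟨g, hKG hg, h, hKG hh, hgh⟩

/-- `G` is a subgroup of `PL₊(I)` without transition chains. -/
structure IsChainFree (G : Subgroup PermR) : Prop where
  isPLGroup : IsPLGroup G
  not_admitsTransitionChain : ¬ AdmitsTransitionChain G

namespace IsChainFree

theorem mono (hG : IsChainFree G) (hKG : K ≤ G) : IsChainFree K :=
  ⟨hG.isPLGroup.mono hKG, mt (AdmitsTransitionChain.mono hKG) hG.not_admitsTransitionChain⟩

theorem strictMono (hG : IsChainFree G) (hg : g ∈ G) : StrictMono (ap g) :=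
  (hG.isPLGroup g hg).strictMono

theorem right_eq_of_left_eq (hG : IsChainFree G) (hg : g ∈ G) (hh : h ∈ G)
    (hgorb : IsOrbital g a b) (hhorb : IsOrbital h a d) : b = d :=
  of_not_not fun hbd ↦ hG.not_admitsTransitionChain <|
    (AdmitsLeftOverlap.of_ne hg hh hgorb hhorb hbd).admitsTransitionChain hG.isPLGroup

theorem right_lt_of_left_mem (hG : IsChainFree G) (hg : g ∈ G) (hh : h ∈ G)
    (hgorb : IsOrbital g a b) (hhorb : IsOrbital h c d) (hc : c ∈ Ioo a b) : d < b := by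
  refine lt_of_not_ge fun hbd ↦ hG.not_admitsTransitionChain ?_
  obtain rfl | hbd := hbd.eq_or_lt
  · exact AdmitsOneSidedOverlap.admitsTransitionChain hG.isPLGroup
      ⟨g, hg, h, hh, a, b, c, hc.1, hc.2, Or.inr ⟨hgorb, hhorb⟩⟩
  · exact ⟨g, hg, h, hh, a, b, c, d, hgorb, hhorb, hc.1, hc.2, hbd⟩

theorem eq_or_nested (hG : IsChainFree G) (hg : g ∈ G) (hh : h ∈ G) (hgorb : IsOrbital g a b)
    (hhorb : IsOrbital h c d) (had : a < d) (hcb : c < b) :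
    a = c ∧ b = d ∨ a < c ∧ d < b ∨ c < a ∧ b < d := by
  obtain hac | rfl | hca := lt_trichotomy a c
  · exact Or.inr (Or.inl ⟨hac, hG.right_lt_of_left_mem hg hh hgorb hhorb ⟨hac, hcb⟩⟩)
  · exact Or.inl ⟨rfl, hG.right_eq_of_left_eq hg hh hgorb hhorb⟩
  · exact Or.inr (Or.inr ⟨hca, hG.right_lt_of_left_mem hh hg hhorb hgorb ⟨hca, had⟩⟩)

theorem ap_left_of_fixed (hG : IsChainFree G) (ht : t ∈ G) (htorb : IsOrbital t c d)
    (hg : g ∈ G) (hy : y ∈ Ioo c d) (hgy : ap g y = y) : ap g c = c := by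
  by_contra hgc
  obtain ⟨e, f, hef, hc⟩ := (hG.isPLGroup g hg).exists_isOrbital hgc
  have hfy : f ≤ y := hef.isComponent.right_le_of_notMem (notMem_supp.2 hgy) (hc.1.trans hy.1)
  exact hG.not_admitsTransitionChain
    ⟨g, hg, t, ht, e, f, c, d, hef, htorb, hc.1, hc.2, hfy.trans_lt hy.2⟩

theorem mem_rightGermKernel_of_fixed (hG : IsChainFree G) (ht : t ∈ G)
    (htorb : IsOrbital t c d) (hg : g ∈ G) (hy : y ∈ Ioo c d) (hgy : ap g y = y) :
    g ∈ rightGermKernel c := by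
  by_contra hgc
  obtain ⟨e, he⟩ := (hG.isPLGroup g hg).exists_isOrbital_of_notMem_rightGermKernel
    (hG.ap_left_of_fixed ht htorb hg hy hgy) hgc
  obtain rfl : e = d := hG.right_eq_of_left_eq hg ht he htorb
  exact he.ap_ne hy hgy

end IsChainFree

end ChainFree

section Insoluble

variable {g t : PermR} {G K : Subgroup PermR} {a b c d : ℝ}

/-- Elements of `K` have nested orbitals growing strictly at both ends. -/
def AdmitsExpandingTower (K : Subgroup PermR) : Prop :=
  ∃ a b : ℕ → ℝ, StrictAnti a ∧ StrictMono b ∧ ∀ i, ∃ g ∈ K, IsOrbital g (a i) (b i)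

/-- A high power of a contraction towards `c` carries `[a, b]` to where `g` is the identity, and
its commutator with `g` agrees with `g` on `[a, b]`. -/
theorem IsChainFree.exists_commutator_isOrbital (hK : IsChainFree K) (hg : g ∈ K) (ht : t ∈ K)
    (hgorb : IsOrbital g a b) (htorb : IsOrbital t c d) (hca : c < a) (hbd : b < d) :
    ∃ k ∈ ⁅K, K⁆, IsOrbital k a b := by
  have hb : b ∈ Ioo c d := ⟨hca.trans hgorb.lt, hbd⟩
  obtain ⟨u, hcu, hu⟩ := mem_rightGermKernel_iff.1
    (hK.mem_rightGermKernel_of_fixed ht htorb hg hb hgorb.ap_right)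
  obtain ⟨s, hsK, hs⟩ := hK.isPLGroup.exists_isContraction ht htorb
  obtain ⟨n, hn⟩ := ((hs.tendsto hb).eventually_lt_const hcu).exists
  have hg_mono := hK.strictMono hg
  refine ⟨⁅g, s ^ n⁆, Subgroup.commutator_mem_commutator hg (pow_mem hsK n),
    hgorb.congr fun x hx ↦ ?_⟩
  have hgx : ap g x ∈ Icc a b :=
    ⟨hgorb.ap_left.symm.trans_le (hg_mono.monotone hx.1),
      (hg_mono.monotone hx.2).trans_eq hgorb.ap_right⟩
  have hsgx : ap (s ^ n) (ap g x) ∈ Ioo c u :=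
    ⟨(hs.ap_pow_mem ⟨hca.trans_le hgx.1, hgx.2.trans_lt hbd⟩ n).1,
      ((hs.strictMono_pow n).monotone hgx.2).trans_lt hn⟩
  rw [commutatorElement_def, ap_mul, ap_mul, ap_mul, ap_inv_eq_self_iff.2 (hu _ hsgx), ap_inv_ap]

theorem AdmitsExpandingTower.commutator (hK : IsChainFree K) (htower : AdmitsExpandingTower K) :
    AdmitsExpandingTower ⁅K, K⁆ := by
  obtain ⟨a, b, ha, hb, horb⟩ := htower
  refine ⟨a, b, ha, hb, fun i ↦ ?_⟩
  obtain ⟨g, hg, hgorb⟩ := horb i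
  obtain ⟨t, ht, htorb⟩ := horb (i + 1)
  exact hK.exists_commutator_isOrbital hg ht hgorb htorb (ha i.lt_succ_self) (hb i.lt_succ_self)

theorem AdmitsTransitionChain.admitsExpandingTower_commutator (hK : IsPLGroup K)
    (hchain : AdmitsTransitionChain K) (hcomm : IsChainFree ⁅K, K⁆) :
    AdmitsExpandingTower ⁅K, K⁆ := by
  obtain ⟨g, hg, h, hh, a, b, c, hcb, hgorb, hhorb⟩ :=
    admitsLeftOverlap_of_transitionChain hK hchain
  obtain ⟨k, hk, x, y, hxy, hx, hcy⟩ :=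
    exists_commutator_isOrbital_of_overlap hK hg hh hgorb hhorb hcb
  obtain ⟨s, hsK, hs⟩ := hK.exists_isContraction hh hhorb
  have horb (n : ℕ) : ∃ k ∈ ⁅K, K⁆, IsOrbital k (ap (s ^ n) x) (ap (s ^ n) y) := by
    have hsn : s ^ n ∈ Subgroup.normalizer ((⁅K, K⁆ : Subgroup PermR) : Set PermR) :=
      Subgroup.normalizer_commutator_ge_left K K (pow_mem hsK n)
    exact ⟨_, (Subgroup.mem_normalizer_iff''.1 hsn k).1 hk, hxy.conj (hs.strictMono_pow n)⟩
  have hanti : StrictAnti fun n ↦ ap (s ^ n) x := hs.strictAnti hx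
  refine ⟨_, _, hanti, strictMono_nat_of_lt_succ fun n ↦ ?_, horb⟩
  obtain ⟨k₀, hk₀, hk₀orb⟩ := horb n
  obtain ⟨k₁, hk₁, hk₁orb⟩ := horb (n + 1)
  have hcy' : c < ap (s ^ (n + 1)) y :=
    (hs.ap_pow_right (n + 1)).symm.trans_lt (hs.strictMono_pow (n + 1) hcy)
  exact hcomm.right_lt_of_left_mem hk₁ hk₀ hk₁orb hk₀orb
    ⟨hanti n.lt_succ_self, (hs.ap_pow_mem hx n).2.trans hcy'⟩

theorem admitsTransitionChain_or_admitsExpandingTower_iteratedCommutator (hG : IsPLGroup G)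
    (hchain : AdmitsTransitionChain G) : ∀ n, AdmitsTransitionChain (iteratedCommutator G n) ∨
      AdmitsExpandingTower (iteratedCommutator G n)
  | 0 => Or.inl hchain
  | n + 1 => by
    rw [or_iff_not_imp_left]
    intro hcomm
    have hPL : IsPLGroup (iteratedCommutator G n) := hG.mono (iteratedCommutator_le G n)
    have hcommfree : IsChainFree (iteratedCommutator G (n + 1)) :=
      ⟨hG.mono (iteratedCommutator_le G (n + 1)), hcomm⟩
    by_cases hn : AdmitsTransitionChain (iteratedCommutator G n)
    · exact hn.admitsExpandingTower_commutator hPL hcommfree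
    · have htower : AdmitsExpandingTower (iteratedCommutator G n) :=
        (admitsTransitionChain_or_admitsExpandingTower_iteratedCommutator hG hchain n).resolve_left
          hn
      exact htower.commutator ⟨hPL, hn⟩

theorem not_isOrbital_one (a b : ℝ) : ¬ IsOrbital 1 a b := fun h ↦ by
  obtain ⟨x, hx⟩ := nonempty_Ioo.2 h.lt
  exact h.ap_ne hx (ap_one x)

theorem AdmitsTransitionChain.not_isSolvable (hG : IsPLGroup G)
    (hchain : AdmitsTransitionChain G) : ¬ Group.IsSolvable G := by
  rw [isSolvable_iff_exists_iteratedCommutator_eq_bot]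
  rintro ⟨n, hn⟩
  have hbot := admitsTransitionChain_or_admitsExpandingTower_iteratedCommutator hG hchain n
  rw [hn] at hbot
  obtain ⟨g, hg, -, -, a, b, -, -, horb, -⟩ | ⟨a, b, -, -, horb⟩ := hbot
  · rw [Subgroup.mem_bot.1 hg] at horb
    exact not_isOrbital_one a b horb
  · obtain ⟨g, hg, horb⟩ := horb 0
    rw [Subgroup.mem_bot.1 hg] at horb
    exact not_isOrbital_one _ _ horb

end Insoluble

section Saturation

variable {h : PermR} {H : Subgroup PermR} {S : Set ℝ} {p : ℝ}

/-- The union of the orbits of `H` that meet `S`. Finiteness of the set of breakpoints of `H` up to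
the action of `H` is the finiteness of some `F` with `BreakSet H ⊆ saturation H F`. -/
def saturation (H : Subgroup PermR) (S : Set ℝ) : Set ℝ := {p | ∃ y ∈ S, ∃ g ∈ H, ap g y = p}

theorem subset_saturation (H : Subgroup PermR) (S : Set ℝ) : S ⊆ saturation H S :=
  fun y hy ↦ ⟨y, hy, 1, one_mem H, ap_one y⟩

theorem ap_mem_saturation_iff (hh : h ∈ H) : ap h p ∈ saturation H S ↔ p ∈ saturation H S := by
  constructor
  · rintro ⟨y, hy, g, hg, hgy⟩
    exact ⟨y, hy, g * h⁻¹, mul_mem hg (inv_mem hh), by rw [ap_mul, hgy, ap_inv_ap]⟩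
  · rintro ⟨y, hy, g, hg, rfl⟩
    exact ⟨y, hy, g * h, mul_mem hg hh, ap_mul g h y⟩

theorem mem_saturation_iff_exists_ap_mem : p ∈ saturation H S ↔ ∃ h ∈ H, ap h p ∈ S := by
  constructor
  · rintro ⟨y, hy, g, hg, rfl⟩
    exact ⟨g⁻¹, inv_mem hg, by rwa [ap_inv_ap]⟩
  · rintro ⟨h, hh, hp⟩
    exact (ap_mem_saturation_iff hh).1 (subset_saturation H S hp)

end Saturation

section NestedOrbitals

variable {g h k : PermR} {H : Subgroup PermR} {S E F : Set ℝ} {a b c d e p q x y : ℝ}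

namespace IsChainFree

theorem exists_isOrbital_mem_mem (hH : IsChainFree H) (hS : IsPreconnected S)
    (hSH : S ⊆ GSupp H) (hx : x ∈ S) (hy : y ∈ S) :
    ∃ h ∈ H, ∃ a b, IsOrbital h a b ∧ x ∈ Ioo a b ∧ y ∈ Ioo a b := by
  refine hS.induction₂
    (fun x y ↦ ∃ h ∈ H, ∃ a b, IsOrbital h a b ∧ x ∈ Ioo a b ∧ y ∈ Ioo a b) ?_ ?_ ?_ hx hy
  · intro x hx
    obtain ⟨h, hh, hhx⟩ := mem_gsupp.1 (hSH hx)
    obtain ⟨a, b, hab, hxab⟩ := (hH.isPLGroup h hh).exists_isOrbital hhx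
    filter_upwards [mem_nhdsWithin_of_mem_nhds (Ioo_mem_nhds hxab.1 hxab.2)] with y hy
    exact ⟨h, hh, a, b, hab, hxab, hy⟩
  · rintro x y z - - - ⟨g, hg, a, b, hab, hx, hy⟩ ⟨h, hh, c, d, hcd, hy', hz⟩
    obtain ⟨rfl, rfl⟩ | ⟨hac, hdb⟩ | ⟨hca, hbd⟩ :=
      hH.eq_or_nested hg hh hab hcd (hy.1.trans hy'.2) (hy'.1.trans hy.2)
    · exact ⟨g, hg, a, b, hab, hx, hz⟩
    · exact ⟨g, hg, a, b, hab, hx, Ioo_subset_Ioo hac.le hdb.le hz⟩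
    · exact ⟨h, hh, c, d, hcd, Ioo_subset_Ioo hca.le hbd.le hx, hz⟩
  · rintro x y - - ⟨h, hh, a, b, hab, hx, hy⟩
    exact ⟨h, hh, a, b, hab, hy, hx⟩

theorem exists_isOrbital_superset (hH : IsChainFree H) (hS : IsPreconnected S)
    (hSH : S ⊆ GSupp H) (hES : E ⊆ S) (hEfin : E.Finite) (hE : E.Nonempty) :
    ∃ h ∈ H, ∃ a b, IsOrbital h a b ∧ E ⊆ Ioo a b := by
  obtain ⟨l, hl, hlmin⟩ := E.exists_min_image id hEfin hE
  obtain ⟨u, hu, humax⟩ := E.exists_max_image id hEfin hE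
  obtain ⟨h, hh, a, b, hab, hlab, huab⟩ :=
    hH.exists_isOrbital_mem_mem hS hSH (hES hl) (hES hu)
  exact ⟨h, hh, a, b, hab, fun y hy ↦ ⟨hlab.1.trans_le (hlmin y hy), (humax y hy).trans_lt huab.2⟩⟩

/-- An element moving the left endpoint of a large orbital into a smaller one would have to carry
the large orbital into the small one, hence move its two endpoints in opposite directions. -/
theorem left_notMem_saturation (hH : IsChainFree H) (hg : g ∈ H) (hgorb : IsOrbital g a b)
    (hk : k ∈ H) (hkorb : IsOrbital k c d) (hac : a < c) (hdb : d < b) :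
    a ∉ saturation H (Ioo c d) := by
  rw [mem_saturation_iff_exists_ap_mem]
  rintro ⟨f, hf, hfa⟩
  have hf_mono := hH.strictMono hf
  have hfb : ap f b < b :=
    (hH.right_lt_of_left_mem hk (mul_mem (mul_mem (inv_mem hf) hg) hf) hkorb (hgorb.conj hf_mono)
      hfa).trans hdb
  have hafa : a < ap f a := hac.trans hfa.1
  obtain ⟨x, y, hxy, ha⟩ := (hH.isPLGroup f hf).exists_isOrbital hafa.ne'
  have hb : b ∈ Ioo x y :=
    ⟨ha.1.trans hgorb.lt, hH.right_lt_of_left_mem hf hg hxy hgorb ha⟩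
  obtain hcontr | hcontr := hxy.isContraction_or_inv hf_mono
  · exact hafa.not_gt (hcontr.ap_lt a ha)
  · exact hfb.not_gt ((ap_inv_lt_iff hf_mono).1 (hcontr.ap_lt b hb))

theorem right_mem_saturation (hH : IsChainFree H)
    (hcd : ∀ g ∈ H, ∀ e q, IsOrbital g e q → e ∈ Ioo c d → q < d)
    (hh : h ∈ H) (hhorb : IsOrbital h e q) (he : e ∈ saturation H (Ioo c d)) :
    q ∈ saturation H (Ioo c d) := by
  rw [mem_saturation_iff_exists_ap_mem] at he ⊢
  obtain ⟨f, hf, hfe⟩ := he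
  have hconj := hhorb.conj (hH.strictMono hf)
  exact ⟨f, hf, hfe.1.trans hconj.lt,
    hcd _ (mul_mem (mul_mem (inv_mem hf) hh) hf) _ _ hconj hfe⟩

/-- The leftmost orbital of `k` in `(a, b)` starting outside `S` does not follow another one
immediately, so it starts at a breakpoint. -/
theorem exists_representative_notMem (hH : IsChainFree H) (ha : ∀ h ∈ H, ap h a = a)
    (hb : ∀ h ∈ H, ap h b = b) (hF : BreakSet H ∩ Ioo a b ⊆ saturation H F) (h0 : 0 ≤ a)
    (hk : k ∈ H) (hka : k ∈ rightGermKernel a) (hS : ∀ h ∈ H, ∀ x, ap h x ∈ S ↔ x ∈ S)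
    (hkS : ∀ e q, IsOrbital k e q → e ∈ S → q ∈ S)
    (hpq : IsOrbital k p q) (hp : p ∈ Ioo a b) (hpS : p ∉ S) :
    ∃ y ∈ F ∩ Ioo a b, y ∉ S := by
  have hkPL := hH.isPLGroup k hk
  obtain ⟨l, ⟨⟨r, hlr⟩, hal, hlS⟩, hlmin⟩ :=
    ({x | (∃ y, IsOrbital k x y) ∧ a < x ∧ x ∉ S} : Set ℝ).exists_min_image id
      (hkPL.finite_left_endpoints.subset fun x hx ↦ hx.1) ⟨p, ⟨q, hpq⟩, hp.1, hpS⟩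
  have hlp : l ≤ p := hlmin p ⟨⟨q, hpq⟩, hp.1, hpS⟩
  have hl : l ∈ Ioo a b := ⟨hal, hlp.trans_lt hp.2⟩
  have hlbreak : l ∈ Breakpoints k := by
    by_contra hlbreak
    obtain ⟨e, hel⟩ := hlr.exists_isOrbital_left hkPL (h0.trans_lt hal) hlbreak
    have hae : a < e := hel.lt_left_of_mem_rightGermKernel (ha k hk) hka hal
    by_cases heS : e ∈ S
    · exact hlS (hkS e l hel heS)
    · exact hel.lt.not_ge (hlmin e ⟨⟨l, hel⟩, hae, heS⟩)
  obtain ⟨y, hy, g, hg, rfl⟩ := hF ⟨mem_biUnion hk hlbreak, hl⟩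
  exact ⟨y, ⟨hy, (ap_mem_Ioo_iff (hH.strictMono hg) (ha g hg) (hb g hg)).1 hl⟩,
    mt (hS g hg y).2 hlS⟩

end IsChainFree

end NestedOrbitals

section GermKernel

variable {h : PermR} {H K : Subgroup PermR} {F : Set ℝ} {a b c d e q x : ℝ}

theorem IsPLGroup.commutator_le_inf_rightGermKernel (hH : IsPLGroup H)
    (ha : ∀ h ∈ H, ap h a = a) : ⁅H, H⁆ ≤ H ⊓ rightGermKernel a :=
  le_inf (commutator_self_le H) <| Subgroup.commutator_le.2 fun g hg h hh ↦
    (hH g hg).commutator_mem_rightGermKernel (hH h hh) (ha g hg) (ha h hh)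

theorem IsPLGroup.le_normalizer_inf_rightGermKernel (hH : IsPLGroup H)
    (ha : ∀ h ∈ H, ap h a = a) :
    H ≤ Subgroup.normalizer ((H ⊓ rightGermKernel a : Subgroup PermR) : Set PermR) :=
  Subgroup.le_normalizer_iff_commutator_le_right.2 <|
    (Subgroup.commutator_mono le_rfl inf_le_left).trans (hH.commutator_le_inf_rightGermKernel ha)

theorem IsGroupOrbital.fixes_endpoints_of_ap_mem (hK : IsGroupOrbital K c d)
    (hh : StrictMono (ap h)) (hhK : h ∈ Subgroup.normalizer (K : Set PermR)) (hx : x ∈ Ioo c d)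
    (hhx : ap h x ∈ Ioo c d) : ap h c = c ∧ ap h d = d :=
  (hK.conj hh hhK).isComponent.eq_of_overlap hK.isComponent
    ((hh hx.1).trans hhx.2) (hhx.1.trans (hh hx.2))

theorem IsGroupOrbital.left_notMem_saturation (hK : IsGroupOrbital K c d) (hH : IsPLGroup H)
    (hHK : H ≤ Subgroup.normalizer (K : Set PermR)) : c ∉ saturation H (Ioo c d) := by
  rw [mem_saturation_iff_exists_ap_mem]
  rintro ⟨h, hh, hhc⟩
  exact (hK.conj (hH h hh).strictMono (hHK hh)).2.2.1 (hK.2.1 hhc)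

namespace IsChainFree

theorem right_lt_of_left_mem_isGroupOrbital (hH : IsChainFree H) (hKH : K ≤ H)
    (hK : IsGroupOrbital K c d) (hh : h ∈ H) (hhorb : IsOrbital h e q) (he : e ∈ Ioo c d) :
    q < d := by
  obtain ⟨k, hk, hke⟩ := mem_gsupp.1 (hK.2.1 he)
  obtain ⟨x, y, hxy, hexy⟩ := (hH.isPLGroup k (hKH hk)).exists_isOrbital hke
  have hyd : y ≤ d := (hxy.isComponent.le_of_subset hK.isComponent (supp_subset_gsupp hk)
    (he.1.trans hexy.2) (hexy.1.trans he.2)).2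
  exact (hH.right_lt_of_left_mem (hKH hk) hh hxy hhorb hexy).trans_le hyd

theorem isOrbital_of_notMem_rightGermKernel (hH : IsChainFree H) (horb : IsGroupOrbital H a b)
    (hh : h ∈ H) (hha : h ∉ rightGermKernel a) : IsOrbital h a b := by
  obtain ⟨e, he⟩ := (hH.isPLGroup h hh).exists_isOrbital_of_notMem_rightGermKernel
    (horb.ap_left hh) hha
  have heb : e ≤ b := (he.isComponent.le_of_subset horb.isComponent (supp_subset_gsupp hh)
    he.lt horb.lt).2
  obtain rfl | heb := heb.eq_or_lt
  · exact he
  · obtain ⟨g, hg, hge⟩ := mem_gsupp.1 (horb.2.1 ⟨he.lt, heb⟩)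
    obtain ⟨x, y, hxy, hexy⟩ := (hH.isPLGroup g hg).exists_isOrbital hge
    have hax : a ≤ x := hxy.isComponent.le_left_of_notMem (notMem_supp.2 (horb.ap_left hg))
      (he.lt.trans hexy.2)
    obtain ⟨-, hey⟩ | ⟨-, hye⟩ | ⟨hxa, -⟩ :=
      hH.eq_or_nested hh hg he hxy (he.lt.trans hexy.2) hexy.1
    · exact absurd hey hexy.2.ne
    · exact absurd hye hexy.2.not_gt
    · exact absurd hxa hax.not_gt

theorem exists_notMem_rightGermKernel (hH : IsChainFree H) (ha : ∀ h ∈ H, ap h a = a)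
    (hb : ∀ h ∈ H, ap h b = b) (hKH : K ≤ H) (hK : IsGroupOrbital K a b) (hFfin : F.Finite)
    (hF : BreakSet H ∩ Ioo a b ⊆ saturation H F) : ∃ k ∈ K, k ∉ rightGermKernel a := by
  by_contra! hKker
  have hKfree := hH.mono hKH
  obtain ⟨m, hm⟩ := nonempty_Ioo.2 hK.lt
  obtain ⟨k, hk, c, d, hcd, hFcd⟩ := hKfree.exists_isOrbital_superset isPreconnected_Ioo hK.2.1
    (insert_subset hm inter_subset_right) ((hFfin.inter_of_left (Ioo a b)).insert m)
    (insert_nonempty _ _)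
  have hmcd : m ∈ Ioo c d := hFcd (mem_insert _ _)
  have hac : a < c := hcd.lt_left_of_mem_rightGermKernel (hK.ap_left hk) (hKker k hk)
    (hm.1.trans hmcd.2)
  have hc : c ∈ Ioo a b := ⟨hac, hmcd.1.trans hm.2⟩
  obtain ⟨k', hk', hkc'⟩ := mem_gsupp.1 (hK.2.1 hc)
  obtain ⟨c', d', hcd', hcc'⟩ := (hKfree.isPLGroup k' hk').exists_isOrbital hkc'
  have hac' : a < c' := hcd'.lt_left_of_mem_rightGermKernel (hK.ap_left hk') (hKker k' hk')
    (hac.trans hcc'.2)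
  have hdd' : d < d' := hKfree.right_lt_of_left_mem hk' hk hcd' hcd hcc'
  obtain ⟨y, hyF, hy⟩ := hH.exists_representative_notMem ha hb hF
    (hK.bounds hKfree.isPLGroup).1 (hKH hk') (hKker k' hk')
    (fun h hh x ↦ ap_mem_saturation_iff hh)
    (fun e q heq ↦ hH.right_mem_saturation
      (fun h hh e q heq he ↦ hH.right_lt_of_left_mem (hKH hk) hh hcd heq he) (hKH hk') heq)
    hcd' ⟨hac', hcc'.1.trans hc.2⟩
    (hH.left_notMem_saturation (hKH hk') hcd' (hKH hk) hcd hcc'.1 hdd')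
  exact hy (subset_saturation H _ (hFcd (mem_insert_of_mem m hyF)))

end IsChainFree

end GermKernel

section Descent

variable {h : PermR} {H : Subgroup PermR} {F : Set ℝ} {a b c d x : ℝ}

namespace IsChainFree

theorem left_lt_left_of_inf_rightGermKernel (hH : IsChainFree H) (horb : IsGroupOrbital H a b)
    (hFfin : F.Finite) (hF : BreakSet H ∩ Ioo a b ⊆ saturation H F)
    (hK : IsGroupOrbital (H ⊓ rightGermKernel a) c d) (had : a < d) (hcb : c < b) :
    a < c ∧ d ≤ b := by
  have hKH : H ⊓ rightGermKernel a ≤ H := inf_le_left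
  have ha : ∀ h ∈ H, ap h a = a := fun h hh ↦ horb.ap_left hh
  obtain ⟨hac, hdb⟩ := hK.isComponent.le_of_subset horb.isComponent (gsupp_mono hKH) had hcb
  refine ⟨hac.lt_of_ne ?_, hdb⟩
  rintro rfl
  have hd : d ∉ GSupp H := notMem_gsupp.2 fun h hh ↦ by
    have hmono := hH.strictMono hh
    have hconj := hK.conj hmono (hH.isPLGroup.le_normalizer_inf_rightGermKernel ha hh)
    rw [ha h hh] at hconj
    exact (hconj.isComponent.eq_of_overlap hK.isComponent had hconj.lt).2
  obtain rfl : d = b := hdb.antisymm (horb.isComponent.right_le_of_notMem hd had)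
  obtain ⟨k, hk, hka⟩ := hH.exists_notMem_rightGermKernel ha (fun h hh ↦ horb.ap_right hh) hKH hK
    hFfin hF
  exact hka hk.2

theorem mem_inf_rightGermKernel_of_ap_mem (hH : IsChainFree H) (horb : IsGroupOrbital H a b)
    (hK : IsGroupOrbital (H ⊓ rightGermKernel a) c d) (hc : c ∈ Ioo a b) (hh : h ∈ H)
    (hx : x ∈ Ioo c d) (hhx : ap h x ∈ Ioo c d) : h ∈ H ⊓ rightGermKernel a := by
  refine ⟨hh, of_not_not fun hha ↦ ?_⟩
  have hhc := (hK.fixes_endpoints_of_ap_mem (hH.strictMono hh)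
    (hH.isPLGroup.le_normalizer_inf_rightGermKernel (fun h hh ↦ horb.ap_left hh) hh) hx hhx).1
  exact (hH.isOrbital_of_notMem_rightGermKernel horb hh hha).ap_ne hc hhc

theorem exists_representatives_inf_rightGermKernel (hH : IsChainFree H)
    (horb : IsGroupOrbital H a b) (hF : BreakSet H ∩ Ioo a b ⊆ saturation H F)
    (hK : IsGroupOrbital (H ⊓ rightGermKernel a) c d) (hac : a < c) (hdb : d ≤ b) :
    ∃ f : ℝ → ℝ, BreakSet (H ⊓ rightGermKernel a : Subgroup PermR) ∩ Ioo c d ⊆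
      saturation (H ⊓ rightGermKernel a) (f '' (F ∩ saturation H (Ioo c d))) := by
  choose! γ hγH hγ using fun y (hy : y ∈ saturation H (Ioo c d)) ↦
    mem_saturation_iff_exists_ap_mem.1 hy
  refine ⟨fun y ↦ ap (γ y) y, ?_⟩
  rintro p ⟨hp, hpcd⟩
  obtain ⟨y, hyF, g, hg, rfl⟩ := hF
    ⟨biUnion_subset_biUnion_left (fun k hk ↦ hk.1) hp, Ioo_subset_Ioo hac.le hdb hpcd⟩
  have hy : y ∈ saturation H (Ioo c d) := mem_saturation_iff_exists_ap_mem.2 ⟨g, hg, hpcd⟩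
  have hmove : ap ((γ y)⁻¹ * g) (ap (γ y) y) = ap g y := by rw [ap_mul, ap_inv_ap]
  exact ⟨_, mem_image_of_mem _ ⟨hyF, hy⟩, (γ y)⁻¹ * g,
    hH.mem_inf_rightGermKernel_of_ap_mem horb hK ⟨hac, hK.lt.trans_le hdb⟩
      (mul_mem (inv_mem (hγH y hy)) hg) (hγ y hy) (hmove ▸ hpcd), hmove⟩

theorem exists_representatives_encard_lt (hH : IsChainFree H) (horb : IsGroupOrbital H a b)
    (hFfin : F.Finite) (hF : BreakSet H ∩ Ioo a b ⊆ saturation H F)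
    (hK : IsGroupOrbital (H ⊓ rightGermKernel a) c d) (had : a < d) (hcb : c < b) :
    ∃ F' : Set ℝ, BreakSet (H ⊓ rightGermKernel a : Subgroup PermR) ∩ Ioo c d ⊆
      saturation (H ⊓ rightGermKernel a) F' ∧ F'.encard < F.encard := by
  have hKH : H ⊓ rightGermKernel a ≤ H := inf_le_left
  have hKfree := hH.mono hKH
  have ha : ∀ h ∈ H, ap h a = a := fun h hh ↦ horb.ap_left hh
  obtain ⟨hac, hdb⟩ := hH.left_lt_left_of_inf_rightGermKernel horb hFfin hF hK had hcb
  have hc : c ∈ Ioo a b := ⟨hac, hcb⟩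
  obtain ⟨f, hf⟩ := hH.exists_representatives_inf_rightGermKernel horb hF hK hac hdb
  obtain ⟨k, hk, hkc⟩ := hKfree.exists_notMem_rightGermKernel (fun k hk ↦ hK.ap_left hk)
    (fun k hk ↦ hK.ap_right hk) le_rfl hK ((hFfin.inter_of_left _).image f) hf
  obtain ⟨e, hce⟩ := (hKfree.isPLGroup k hk).exists_isOrbital_of_notMem_rightGermKernel
    (hK.ap_left hk) hkc
  obtain ⟨y, hyF, hy⟩ := hH.exists_representative_notMem ha (fun h hh ↦ horb.ap_right hh) hF
    (horb.bounds hH.isPLGroup).1 hk.1 hk.2 (fun h hh x ↦ ap_mem_saturation_iff hh)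
    (fun e q heq ↦ hH.right_mem_saturation
      (fun h hh e q ↦ hH.right_lt_of_left_mem_isGroupOrbital hKH hK hh) hk.1 heq) hce hc
    (hK.left_notMem_saturation hH.isPLGroup (hH.isPLGroup.le_normalizer_inf_rightGermKernel ha))
  refine ⟨_, hf, (encard_image_le f _).trans_lt ?_⟩
  exact (hFfin.inter_of_left _).encard_lt_encard
    (inter_subset_left.ssubset_of_mem_notMem hyF.1 fun hyS ↦ hy hyS.2)

end IsChainFree

theorem IsGroupOrbital.nonempty_breakSet_inter_Ioo (horb : IsGroupOrbital H a b)
    (hH : IsPLGroup H) : (BreakSet H ∩ Ioo a b).Nonempty := by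
  obtain ⟨m, hm⟩ := nonempty_Ioo.2 horb.lt
  obtain ⟨h, hh, hhm⟩ := mem_gsupp.1 (horb.2.1 hm)
  obtain ⟨c, d, hcd, hmcd⟩ := (hH h hh).exists_isOrbital hhm
  obtain ⟨hac, hdb⟩ := hcd.isComponent.le_of_subset horb.isComponent (supp_subset_gsupp hh)
    (hm.1.trans hmcd.2) (hmcd.1.trans hm.2)
  obtain ⟨p, hp, hpcd⟩ := hcd.exists_breakpoint (hH h hh)
  exact ⟨p, mem_biUnion hh hp, Ioo_subset_Ioo hac hdb hpcd⟩

/-- Passing to the kernel of the germ at the left end of the orbital around `x` uses up one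
representative of the breakpoints. -/
theorem germKernel_induction {P : ℕ → Subgroup PermR → Prop}
    (notMem : ∀ N H, IsChainFree H → x ∉ GSupp H → P N H)
    (succ : ∀ N H a b, IsChainFree H → IsGroupOrbital H a b → x ∈ Ioo a b →
      P N (H ⊓ rightGermKernel a) → P (N + 1) H) (N : ℕ) (H : Subgroup PermR)
    (hH : IsChainFree H) (hreps : ∀ a b, IsGroupOrbital H a b → x ∈ Ioo a b →
      ∃ F, BreakSet H ∩ Ioo a b ⊆ saturation H F ∧ F.encard ≤ N) : P N H := by
  induction N generalizing H with
  | zero =>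
    refine notMem 0 H hH fun hx ↦ ?_
    obtain ⟨a, b, hab, hxab⟩ := hH.isPLGroup.exists_isGroupOrbital hx
    obtain ⟨F, hF, hFN⟩ := hreps a b hab hxab
    obtain ⟨p, hp⟩ := hab.nonempty_breakSet_inter_Ioo hH.isPLGroup
    obtain ⟨y, hy, -⟩ := hF hp
    rw [Nat.cast_zero, nonpos_iff_eq_zero, encard_eq_zero] at hFN
    exact absurd hy (hFN ▸ notMem_empty y)
  | succ N ih =>
    by_cases hx : x ∉ GSupp H
    · exact notMem (N + 1) H hH hx
    obtain ⟨a, b, hab, hxab⟩ := hH.isPLGroup.exists_isGroupOrbital (not_not.1 hx)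
    obtain ⟨F, hF, hFN⟩ := hreps a b hab hxab
    refine succ N H a b hH hab hxab (ih _ (hH.mono inf_le_left) fun c d hcd hxcd ↦ ?_)
    obtain ⟨F', hF', hlt⟩ := hH.exists_representatives_encard_lt hab
      (finite_of_encard_le_coe hFN) hF hcd (hxab.1.trans hxcd.2) (hxcd.1.trans hxab.2)
    exact ⟨F', hF', Order.le_of_lt_add_one (by exact_mod_cast hlt.trans_le hFN)⟩

end Descent

section Applications

variable {H G : Subgroup PermR} {F : Set ℝ} {x : ℝ} {N : ℕ}

theorem IsChainFree.ap_eq_self_of_mem_iteratedCommutator (hH : IsChainFree H)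
    (hreps : ∀ a b, IsGroupOrbital H a b → x ∈ Ioo a b →
      ∃ F, BreakSet H ∩ Ioo a b ⊆ saturation H F ∧ F.encard ≤ N) :
    ∀ h ∈ iteratedCommutator H N, ap h x = x := by
  refine germKernel_induction (P := fun N H ↦ ∀ h ∈ iteratedCommutator H N, ap h x = x)
    (fun N H _ hx h hh ↦ notMem_gsupp.1 hx h (iteratedCommutator_le H N hh)) ?_ N H hH hreps
  intro N H a b hH hab _ hfix h hh
  exact hfix h (iteratedCommutator_succ_le
    (hH.isPLGroup.commutator_le_inf_rightGermKernel fun h hh ↦ hab.ap_left hh) N hh)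

theorem IsChainFree.isSolvable (hG : IsChainFree G) (hF : F.Finite)
    (hreps : BreakSet G ⊆ saturation G F) : Group.IsSolvable G := by
  refine (isSolvable_iff_exists_iteratedCommutator_eq_bot G).2 ⟨F.ncard, ?_⟩
  refine (Subgroup.eq_bot_iff_forall _).2 fun h hh ↦ ap_ext fun x ↦ ?_
  rw [ap_one]
  exact hG.ap_eq_self_of_mem_iteratedCommutator (fun a b _ _ ↦
    ⟨F, inter_subset_left.trans hreps, hF.cast_ncard_eq.ge⟩) h hh

/-- The orbitals of elements of `H` that contain `x`, as pairs of endpoints. -/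
def orbitalsThrough (H : Subgroup PermR) (x : ℝ) : Set (ℝ × ℝ) :=
  {s | x ∈ Ioo s.1 s.2 ∧ ∃ h ∈ H, IsOrbital h s.1 s.2}

theorem IsChainFree.orbitalsThrough_subset_insert {a b : ℝ} (hH : IsChainFree H)
    (hab : IsGroupOrbital H a b) (hx : x ∈ Ioo a b) :
    orbitalsThrough H x ⊆ insert (a, b) (orbitalsThrough (H ⊓ rightGermKernel a) x) := by
  rintro ⟨c, d⟩ ⟨hxcd, h, hh, hcd⟩
  by_cases hha : h ∈ rightGermKernel a
  · exact mem_insert_of_mem _ ⟨hxcd, h, ⟨hh, hha⟩, hcd⟩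
  · obtain ⟨rfl, rfl⟩ := hcd.isComponent.eq_of_overlap
      (hH.isOrbital_of_notMem_rightGermKernel hab hh hha).isComponent
      (hxcd.1.trans hx.2) (hx.1.trans hxcd.2)
    exact mem_insert _ _

theorem IsChainFree.encard_orbitalsThrough_le (hH : IsChainFree H)
    (hreps : ∀ a b, IsGroupOrbital H a b → x ∈ Ioo a b →
      ∃ F, BreakSet H ∩ Ioo a b ⊆ saturation H F ∧ F.encard ≤ N) :
    (orbitalsThrough H x).encard ≤ N := by
  refine germKernel_induction (P := fun N H ↦ (orbitalsThrough H x).encard ≤ N) ?_ ?_ N H hH hreps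
  · intro N H _ hx
    have hempty : orbitalsThrough H x = ∅ := eq_empty_of_forall_notMem
      fun s ⟨hxs, h, hh, hs⟩ ↦ hx (supp_subset_gsupp hh (hs.2.1 hxs))
    simp only [hempty, encard_empty, zero_le]
  · intro N H a b hH hab hx hN
    calc (orbitalsThrough H x).encard
        ≤ (orbitalsThrough (H ⊓ rightGermKernel a) x).encard + 1 :=
          (encard_le_encard (hH.orbitalsThrough_subset_insert hab hx)).trans (encard_insert_le _ _)
      _ ≤ (N + 1 : ℕ) := by exact_mod_cast add_le_add_left hN 1

theorem nonempty_biInter_of_nested {ι α : Type*} {s : Set ι} {f : ι → Set α} (hs : s.Finite)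
    (hne : s.Nonempty) (hf : ∀ i ∈ s, (f i).Nonempty)
    (hnested : ∀ i ∈ s, ∀ j ∈ s, f i ⊆ f j ∨ f j ⊆ f i) : (⋂ i ∈ s, f i).Nonempty := by
  obtain ⟨i, hi, himin⟩ := hs.exists_minimalFor f s hne
  obtain ⟨x, hx⟩ := hf i hi
  exact ⟨x, mem_iInter₂.2 fun j hj ↦ (hnested i hi j hj).elim (· hx) (himin hj · hx)⟩

theorem IsChainFree.not_admitsInfiniteTower (hG : IsChainFree G) (hF : F.Finite)
    (hreps : BreakSet G ⊆ saturation G F) : ¬ AdmitsInfiniteTower G := by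
  rintro ⟨T, ⟨⟨horb, hnested, hsig⟩, hTG⟩, hT⟩
  have fst_injOn : InjOn Prod.fst T := fun p hp q hq hpq ↦ Prod.ext hpq (hsig p hp q hq hpq)
  obtain ⟨s, hsT, hs⟩ := hT.exists_subset_card_eq (F.ncard + 1)
  obtain ⟨x, hx⟩ := nonempty_biInter_of_nested (f := fun p ↦ Ioo p.1.1 p.1.2) s.finite_toSet
    (Finset.card_pos.1 (hs ▸ Nat.succ_pos _)) (fun p hp ↦ nonempty_Ioo.2 (horb p (hsT hp)).lt)
    (fun p hp q hq ↦ hnested p (hsT hp) q (hsT hq))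
  have hle : (s : Set ((ℝ × ℝ) × PermR)).encard ≤ F.ncard := by
    calc (s : Set ((ℝ × ℝ) × PermR)).encard
        = (Prod.fst '' (s : Set ((ℝ × ℝ) × PermR))).encard := (fst_injOn.mono hsT).encard_image.symm
      _ ≤ (orbitalsThrough G x).encard := encard_le_encard <| image_subset_iff.2 fun p hp ↦
          ⟨mem_iInter₂.1 hx p hp, p.2, hTG p (hsT hp), horb p (hsT hp)⟩
      _ ≤ F.ncard := hG.encard_orbitalsThrough_le fun a b _ _ ↦
          ⟨F, inter_subset_left.trans hreps, hF.cast_ncard_eq.ge⟩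
  rw [encard_coe_eq_coe_finsetCard, hs, Nat.cast_le] at hle
  exact hle.not_gt (Nat.lt_succ_self _)

end Applications

section Breakpoints

variable {g h : PermR} {x : ℝ}

theorem IsLocallyAffineAt.mul (hg : IsLocallyAffineAt g x) (hh : IsLocallyAffineAt h (ap g x))
    (hcont : Continuous (ap g)) : IsLocallyAffineAt (g * h) x := by
  obtain ⟨m, b, hg⟩ := hg
  obtain ⟨n, c, hh⟩ := hh
  refine ⟨n * m, n * b + c, ?_⟩
  filter_upwards [hg, hcont.tendsto x hh] with y hgy hhy
  rw [mem_preimage, mem_ofPred_eq] at hhy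
  rw [ap_mul, hhy, hgy]
  ring

theorem IsLocallyAffineAt.inv (hg : IsLocallyAffineAt g (ap g⁻¹ x)) (hmono : StrictMono (ap g)) :
    IsLocallyAffineAt g⁻¹ x := by
  obtain ⟨m, b, hg⟩ := hg
  have hcont := (continuous_ap (strictMono_ap_inv hmono)).tendsto x
  have hinv : ∀ᶠ y in 𝓝 x, y = m * ap g⁻¹ y + b := by
    filter_upwards [hcont hg] with y hy
    rw [mem_preimage, mem_ofPred_eq, ap_ap_inv] at hy
    exact hy
  have hm : m ≠ 0 := by
    rintro rfl
    obtain ⟨y, hy, hyx⟩ := ((hinv.filter_mono nhdsWithin_le_nhds).and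
      (self_mem_nhdsWithin (a := x) (s := Ioi x))).exists
    exact hyx.ne (by linarith [hinv.self_of_nhds])
  refine ⟨m⁻¹, -(m⁻¹ * b), hinv.mono fun y hy ↦ ?_⟩
  field_simp
  linarith

theorem IsPL.breakpoints_mul_subset (hg : IsPL g) :
    Breakpoints (g * h) ⊆ Breakpoints g ∪ ap g ⁻¹' Breakpoints h := by
  rintro x ⟨hx, hxgh⟩
  have hgx : ap g x ∈ Ioo 0 1 := (ap_mem_Ioo_iff hg.strictMono (hg.2.1 0 (by simp))
    (hg.2.1 1 (by simp))).2 hx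
  by_cases hxg : IsLocallyAffineAt g x
  · exact Or.inr ⟨hgx, fun hxh ↦ hxgh (hxg.mul hxh (continuous_ap hg.strictMono))⟩
  · exact Or.inl ⟨hx, hxg⟩

theorem IsPL.breakpoints_inv_subset (hg : IsPL g) :
    Breakpoints g⁻¹ ⊆ ap g⁻¹ ⁻¹' Breakpoints g := by
  rintro x ⟨hx, hxg⟩
  have hgx : ap g⁻¹ x ∈ Ioo 0 1 := (ap_mem_Ioo_iff (strictMono_ap_inv hg.strictMono)
    (ap_inv_eq_self_iff.2 (hg.2.1 0 (by simp))) (ap_inv_eq_self_iff.2 (hg.2.1 1 (by simp)))).2 hx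
  exact ⟨hgx, fun hxg' ↦ hxg (hxg'.inv hg.strictMono)⟩

theorem IsPLGroup.breakSet_closure_subset {X : Set PermR}
    (hX : IsPLGroup (Subgroup.closure X)) :
    BreakSet (Subgroup.closure X : Set PermR) ⊆ saturation (Subgroup.closure X) (BreakSet X) := by
  refine iUnion₂_subset fun g hg ↦ ?_
  induction hg using Subgroup.closure_induction with
  | mem g hg => exact (subset_biUnion_of_mem hg).trans (subset_saturation _ _)
  | one => exact fun x hx ↦ absurd ⟨1, 0, .of_forall fun y ↦ by rw [ap_one]; ring⟩ hx.2
  | mul g h hg _ ihg ihh =>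
    exact (hX g hg).breakpoints_mul_subset.trans <|
      union_subset ihg fun x hx ↦ (ap_mem_saturation_iff hg).1 (ihh hx)
  | inv g hg ih =>
    exact (hX g hg).breakpoints_inv_subset.trans fun x hx ↦
      (ap_mem_saturation_iff (inv_mem hg)).1 (ih hx)

end Breakpoints

theorem statement0_general {G : Subgroup PermR} (hPL : ∀ g ∈ G, IsPL g) {F : Set ℝ}
    (hF : F.Finite) (hreps : BreakSet G ⊆ saturation G F) :
    List.TFAE [¬ Group.IsSolvable ↥G, AdmitsTransitionChain G,
      AdmitsOneSidedOverlap G, AdmitsInfiniteTower G] := by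
  tfae_have 1 → 2 := fun hinsoluble ↦ of_not_not fun hchain ↦
    hinsoluble (IsChainFree.isSolvable ⟨hPL, hchain⟩ hF hreps)
  tfae_have 2 → 1 := AdmitsTransitionChain.not_isSolvable hPL
  tfae_have 2 → 3 := fun hchain ↦
    (admitsLeftOverlap_of_transitionChain hPL hchain).admitsOneSidedOverlap
  tfae_have 3 → 2 := AdmitsOneSidedOverlap.admitsTransitionChain hPL
  tfae_have 2 → 4 := fun hchain ↦
    (admitsLeftOverlap_of_transitionChain hPL hchain).admitsInfiniteTower hPL
  tfae_have 4 → 2 := fun htower ↦ of_not_not fun hchain ↦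
    IsChainFree.not_admitsInfiniteTower ⟨hPL, hchain⟩ hF hreps htower
  tfae_finish

theorem statement0 (X : Set PermR) (hXfin : X.Finite)
    (G : Subgroup PermR) (hG : G = Subgroup.closure X)
    (hPL : ∀ g ∈ G, IsPL g) :
    List.TFAE [¬ IsSolvable ↥G, AdmitsTransitionChain G,
      AdmitsOneSidedOverlap G, AdmitsInfiniteTower G] := by
  subst hG
  exact statement0_general hPL (hXfin.biUnion fun g hg ↦ (hPL g (Subgroup.subset_closure hg)).2.2)
    (IsPLGroup.breakSet_closure_subset hPL)

end PLPaper
end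

section
/- If G is a subgroup of PL₊(I) and G admits a bad overlap, then G is not soluble. -/
open Set

namespace PLPaper

/-! Let `Γ = ⟨f, g⟩` act on a line preserving the order, and let `F` be the set of points fixed by
the derived group `[Γ, Γ]`. It is `Γ`-stable and closed under suprema and infima, and `f` and `g`
commute on it; when orbitals `(a, b)` of `f` and `(c, d)` of `g` overlap badly, this forces `F` to
miss both. The first point `B` of `F` beyond `b` is then fixed by `Γ`, and `F` misses `(a, B)`. The
germs from the left of piecewise-linear maps fixing `B` commute, so each element of `[Γ, Γ]` is
trivial near `B` on the left.

Now suppose that `D ≤ [Γ, Γ]` has no fixed point in `(a, B)`; then neither has `[D, D]`. Indeed the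
`D`-orbit of any `x ∈ (a, B)` accumulates at `B`, so each `u ∈ D` fixes some point `k • x` of that
orbit. If `[D, D]` fixed `x`, then `u` and `k` would commute at `x`, whence `k • u • x = k • x` and
`u` would fix `x`. By induction no term of the derived series has a fixed point in `(a, B)`, so none
is trivial. -/

section OrderAction

open MulAction Filter
open scoped commutatorElement Pointwise Topology

variable {Γ α : Type*} [Group Γ] [MulAction Γ α]

theorem mem_stabilizer_fixedPoints_of_normal (N : Subgroup Γ) [N.Normal] (γ : Γ) :
    γ ∈ stabilizer Γ (fixedPoints N α) :=
  mem_stabilizer_set.mpr fun x =>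
    ⟨fun h => by simpa using smul_mem_fixedPoints_of_normal γ⁻¹ h,
      smul_mem_fixedPoints_of_normal γ⟩

theorem smul_comm_of_mem_fixedPoints_commutator {D : Subgroup Γ} {u v : Γ} (hu : u ∈ D)
    (hv : v ∈ D) {x : α} (hx : x ∈ fixedPoints ↥⁅D, D⁆ α) : u • v • x = v • u • x := by
  have hcomm : ⁅v⁻¹, u⁻¹⁆ ∈ ⁅D, D⁆ :=
    Subgroup.commutator_mem_commutator (D.inv_mem hv) (D.inv_mem hu)
  have hfix : ⁅v⁻¹, u⁻¹⁆ • x = x := hx ⟨_, hcomm⟩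
  rw [commutatorElement_def, inv_inv, inv_inv, mul_smul, mul_smul, mul_smul, inv_smul_eq_iff,
    inv_smul_eq_iff] at hfix
  exact hfix.symm

theorem mem_fixedPoints_of_closure_eq_top {T : Set Γ} (hT : Subgroup.closure T = ⊤) {x : α}
    (hx : ∀ γ ∈ T, γ • x = x) : x ∈ fixedPoints Γ α := by
  have hle : Subgroup.closure T ≤ stabilizer Γ x := (Subgroup.closure_le _).mpr hx
  exact fun γ => hle (hT ▸ Subgroup.mem_top γ)

/-- The elements of `Γ` whose germ at `x` from the left is trivial: they fix `x` and every point of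
some left neighbourhood of `x`. -/
def leftGermKernel (Γ : Type*) {α : Type*} [Group Γ] [MulAction Γ α] [Preorder α]
    [TopologicalSpace α] (x : α) : Subgroup Γ where
  carrier := {γ | ∀ᶠ y in 𝓝[≤] x, γ • y = y}
  one_mem' := show ∀ᶠ y in 𝓝[≤] x, (1 : Γ) • y = y from Eventually.of_forall (one_smul Γ)
  mul_mem' {u v} hu hv := by
    change ∀ᶠ y in 𝓝[≤] x, (u * v) • y = y
    filter_upwards [hu, hv] with y huy hvy
    rw [mul_smul, hvy, huy]
  inv_mem' {u} hu := by
    change ∀ᶠ y in 𝓝[≤] x, u⁻¹ • y = y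
    filter_upwards [hu] with y hy
    rw [inv_smul_eq_iff, hy]

/-- For every point `x`, the germs at `x` from the left of the elements of `Γ` fixing `x` commute
with each other. -/
def HasCommutingLeftGerms (Γ α : Type*) [Group Γ] [MulAction Γ α] [Preorder α]
    [TopologicalSpace α] : Prop :=
  ∀ ⦃u v : Γ⦄ ⦃x : α⦄, u • x = x → v • x = x → ∀ᶠ y in 𝓝[≤] x, u • v • y = v • u • y

theorem HasCommutingLeftGerms.subgroup [Preorder α] [TopologicalSpace α]
    (h : HasCommutingLeftGerms Γ α) (K : Subgroup Γ) : HasCommutingLeftGerms K α :=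
  fun _ _ _ hu hv => h hu hv

theorem HasCommutingLeftGerms.commutator_le_leftGermKernel [Preorder α] [TopologicalSpace α]
    (h : HasCommutingLeftGerms Γ α) {x : α} (hx : x ∈ fixedPoints Γ α) :
    commutator Γ ≤ leftGermKernel Γ x := by
  refine Subgroup.commutator_le.mpr fun u _ v _ => ?_
  filter_upwards [h (hx u⁻¹) (hx v⁻¹)] with y hy
  rw [commutatorElement_def, mul_smul, mul_smul, mul_smul, hy, smul_inv_smul, smul_inv_smul]

section Preorder

variable [Preorder α] [CovariantClass Γ α HSMul.hSMul LE.le]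

instance covariantClass_smul_orderDual : CovariantClass Γ αᵒᵈ HSMul.hSMul LE.le :=
  ⟨fun γ _ _ h => smul_mono_right (α := α) γ h⟩

instance covariantClass_smul_subgroup (D : Subgroup Γ) : CovariantClass D α HSMul.hSMul LE.le :=
  ⟨fun δ _ _ h => smul_mono_right (δ : Γ) h⟩

/-- The order automorphism by which a group element acts, when the action is order-preserving. -/
def smulOrderIso (γ : Γ) : α ≃o α :=
  (MulAction.toPerm γ).toOrderIso (smul_mono_right γ) (smul_mono_right γ⁻¹)

theorem smul_Ioo (γ : Γ) (a b : α) : γ • Ioo a b = Ioo (γ • a) (γ • b) :=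
  (smulOrderIso γ).image_Ioo a b

theorem smul_Ici (γ : Γ) (a : α) : γ • Ici a = Ici (γ • a) :=
  (smulOrderIso γ).image_Ici a

end Preorder

section PartialOrder

variable [PartialOrder α] [CovariantClass Γ α HSMul.hSMul LE.le]

theorem stabilizer_le_stabilizer_of_isLUB {S : Set α} {s : α} (hs : IsLUB S s) :
    stabilizer Γ S ≤ stabilizer Γ s := by
  intro γ hγ
  have hlub : IsLUB (γ • S) (γ • s) := (smulOrderIso γ).isLUB_image'.mpr hs
  rw [mem_stabilizer_iff.mp hγ] at hlub
  exact hlub.unique hs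

theorem stabilizer_le_stabilizer_of_isGLB {S : Set α} {s : α} (hs : IsGLB S s) :
    stabilizer Γ S ≤ stabilizer Γ s :=
  stabilizer_le_stabilizer_of_isLUB (α := αᵒᵈ) hs.dual

theorem mem_fixedPoints_of_isLUB {S : Set α} {s : α} (hS : S ⊆ fixedPoints Γ α)
    (hs : IsLUB S s) : s ∈ fixedPoints Γ α := fun γ =>
  stabilizer_le_stabilizer_of_isLUB hs <| mem_stabilizer_iff.mpr <|
    (image_congr fun _ hx => hS hx γ).trans (image_id' S)

end PartialOrder

/-- `(a, b)` is a gap in the fixed-point set of `γ`. When `a < b` this says that `(a, b)` is an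
orbital of `γ`. -/
structure IsFixedGap [Preorder α] (γ : Γ) (a b : α) : Prop where
  left : γ • a = a
  right : γ • b = b
  smul_ne : ∀ x ∈ Ioo a b, γ • x ≠ x

theorem IsFixedGap.dual [Preorder α] {γ : Γ} {a b : α} (h : IsFixedGap γ a b) :
    IsFixedGap γ (OrderDual.toDual b) (OrderDual.toDual a) :=
  ⟨h.right, h.left, fun x hx => h.smul_ne x ⟨hx.2, hx.1⟩⟩

theorem IsFixedGap.subgroup [Preorder α] {γ : Γ} {a b : α} (h : IsFixedGap γ a b)
    {K : Subgroup Γ} (hγ : γ ∈ K) : IsFixedGap (⟨γ, hγ⟩ : K) a b :=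
  ⟨h.left, h.right, h.smul_ne⟩

/-- The orbitals `(a, b)` of `f` and `(c, d)` of `g` form a bad overlap. -/
structure IsBadOverlap [Preorder α] (f g : Γ) (a b c d : α) : Prop where
  isFixedGap_left : IsFixedGap f a b
  isFixedGap_right : IsFixedGap g c d
  nonempty_inter : (Ioo a b ∩ Ioo c d).Nonempty
  ne : Ioo a b ≠ Ioo c d
  not_Icc_left_subset : ¬Icc a b ⊆ Ioo c d
  not_Icc_right_subset : ¬Icc c d ⊆ Ioo a b

theorem IsBadOverlap.subgroup [Preorder α] {f g : Γ} {a b c d : α} (h : IsBadOverlap f g a b c d)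
    {K : Subgroup Γ} (hf : f ∈ K) (hg : g ∈ K) :
    IsBadOverlap (⟨f, hf⟩ : K) (⟨g, hg⟩ : K) a b c d where
  __ := h
  isFixedGap_left := h.isFixedGap_left.subgroup hf
  isFixedGap_right := h.isFixedGap_right.subgroup hg

variable [ConditionallyCompleteLinearOrder α] [CovariantClass Γ α HSMul.hSMul LE.le]

theorem IsFixedGap.isLUB_inter_Ioo {γ : Γ} {a b : α} (h : IsFixedGap γ a b) {S : Set α}
    (hS : γ ∈ stabilizer Γ S) (hne : (S ∩ Ioo a b).Nonempty) : IsLUB (S ∩ Ioo a b) b := by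
  have hlub := isLUB_csSup hne (bddAbove_Ioo.mono inter_subset_right)
  have hstab : γ ∈ stabilizer Γ (S ∩ Ioo a b) := by
    rw [mem_stabilizer_iff, smul_set_inter, mem_stabilizer_iff.mp hS, smul_Ioo, h.left, h.right]
  have hfix : γ • sSup (S ∩ Ioo a b) = sSup (S ∩ Ioo a b) :=
    stabilizer_le_stabilizer_of_isLUB hlub hstab
  obtain ⟨x, hx⟩ := hne
  have hlt : a < sSup (S ∩ Ioo a b) := hx.2.1.trans_le (hlub.1 hx)
  have hle : sSup (S ∩ Ioo a b) ≤ b := hlub.2 fun y hy => hy.2.2.le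
  have heq : sSup (S ∩ Ioo a b) = b :=
    hle.eq_of_not_lt fun hltb => h.smul_ne _ ⟨hlt, hltb⟩ hfix
  rwa [heq] at hlub

theorem IsFixedGap.isGLB_inter_Ioo {γ : Γ} {a b : α} (h : IsFixedGap γ a b) {S : Set α}
    (hS : γ ∈ stabilizer Γ S) (hne : (S ∩ Ioo a b).Nonempty) : IsGLB (S ∩ Ioo a b) a := by
  have hdual := h.dual.isLUB_inter_Ioo (S := OrderDual.ofDual ⁻¹' S) hS
  rw [Ioo_toDual] at hdual
  exact hdual hne

section Overlap

variable {f g : Γ} {a b c d : α}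

theorem notMem_fixedPoints_commutator_of_overlap (hf : IsFixedGap f a b) (hg : IsFixedGap g c d)
    (hac : a ≤ c) (hcb : c < b) (hbd : b < d) : b ∉ fixedPoints (commutator Γ) α := by
  intro hb
  have hstab : g ∈ stabilizer Γ (fixedPoints (commutator Γ) α ∩ fixedBy α f) := by
    refine mem_stabilizer_set.mpr fun x => ?_
    rw [mem_inter_iff, mem_inter_iff,
      mem_stabilizer_set.mp (mem_stabilizer_fixedPoints_of_normal (commutator Γ) g) x]
    refine and_congr_right fun hx => ?_
    rw [mem_fixedBy, mem_fixedBy, smul_comm_of_mem_fixedPoints_commutator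
      (Subgroup.mem_top f) (Subgroup.mem_top g) hx, smul_left_cancel_iff]
  have hglb := hg.isGLB_inter_Ioo hstab ⟨b, ⟨hb, hf.right⟩, hcb, hbd⟩
  obtain ⟨x, hx, -, hxb⟩ := hglb.exists_between hcb
  exact hf.smul_ne x ⟨hac.trans_lt hx.2.1, hxb⟩ hx.1.2

theorem disjoint_fixedPoints_commutator_of_lt_right (hf : IsFixedGap f a b)
    (hg : IsFixedGap g c d) (hac : a ≤ c) (hcb : c < b) (hbd : b < d) :
    Disjoint (fixedPoints (commutator Γ) α) (Ioo a b ∪ Ioo c d) := by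
  have hstab := mem_stabilizer_fixedPoints_of_normal (α := α) (commutator Γ)
  have hab : Disjoint (fixedPoints (commutator Γ) α) (Ioo a b) := by
    by_contra hmeet
    have hlub := hf.isLUB_inter_Ioo (hstab f) (not_disjoint_iff_nonempty_inter.mp hmeet)
    exact notMem_fixedPoints_commutator_of_overlap hf hg hac hcb hbd
      (mem_fixedPoints_of_isLUB inter_subset_left hlub)
  refine disjoint_union_right.mpr ⟨hab, ?_⟩
  by_contra hmeet
  have hglb := hg.isGLB_inter_Ioo (hstab g) (not_disjoint_iff_nonempty_inter.mp hmeet)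
  obtain ⟨x, hx, -, hxb⟩ := hglb.exists_between hcb
  exact disjoint_left.mp hab hx.1 ⟨hac.trans_lt hx.2.1, hxb⟩

theorem disjoint_fixedPoints_commutator_of_lt_left (hf : IsFixedGap f a b)
    (hg : IsFixedGap g c d) (hac : a < c) (hcb : c < b) (hbd : b ≤ d) :
    Disjoint (fixedPoints (commutator Γ) α) (Ioo a b ∪ Ioo c d) := by
  have hdual := disjoint_fixedPoints_commutator_of_lt_right hg.dual hf.dual
    (OrderDual.toDual_le_toDual.mpr hbd) (OrderDual.toDual_lt_toDual.mpr hcb)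
    (OrderDual.toDual_lt_toDual.mpr hac)
  rw [Ioo_toDual, Ioo_toDual, union_comm] at hdual
  exact hdual

theorem IsBadOverlap.disjoint_fixedPoints_commutator (h : IsBadOverlap f g a b c d) :
    Disjoint (fixedPoints (commutator Γ) α) (Ioo a b ∪ Ioo c d) := by
  obtain ⟨hf, hg, ⟨x, ⟨hax, hxb⟩, hcx, hxd⟩, hne, hab, hcd⟩ := h
  rcases lt_trichotomy b d with hbd | rfl | hdb
  · have hac : a ≤ c := not_lt.mp fun hca => hab (Icc_subset_Ioo hca hbd)
    exact disjoint_fixedPoints_commutator_of_lt_right hf hg hac (hcx.trans hxb) hbd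
  · rcases lt_trichotomy a c with hac | rfl | hca
    · exact disjoint_fixedPoints_commutator_of_lt_left hf hg hac (hcx.trans hxb) le_rfl
    · exact absurd rfl hne
    · rw [union_comm]
      exact disjoint_fixedPoints_commutator_of_lt_left hg hf hca (hax.trans hxd) le_rfl
  · have hca : c ≤ a := not_lt.mp fun hac => hcd (Icc_subset_Ioo hac hdb)
    rw [union_comm]
    exact disjoint_fixedPoints_commutator_of_lt_right hg hf hca (hax.trans hxd) hdb

theorem IsBadOverlap.exists_disjoint_fixedPoints_commutator (h : IsBadOverlap f g a b c d)
    (hgen : Subgroup.closure {f, g} = ⊤) {e : α} (hbe : b ≤ e) (he : e ∈ fixedPoints Γ α) :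
    ∃ B ∈ fixedPoints Γ α, b ≤ B ∧ Disjoint (fixedPoints (commutator Γ) α) (Ioo a B) := by
  obtain ⟨hFab, hFcd⟩ := disjoint_union_right.mp h.disjoint_fixedPoints_commutator
  obtain ⟨hf, hg, ⟨x, ⟨hax, hxb⟩, hcx, hxd⟩, -⟩ := h
  set F := fixedPoints (commutator Γ) α
  have hstab (γ : Γ) : γ • F = F := mem_stabilizer_fixedPoints_of_normal (commutator Γ) γ
  have hIci : F ∩ Ici b = F ∩ Ici d := by
    ext y
    refine and_congr_right fun hy => ⟨fun hby => ?_, fun hdy => ?_⟩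
    · exact not_lt.mp fun hyd => disjoint_left.mp hFcd hy ⟨(hcx.trans hxb).trans_le hby, hyd⟩
    · exact not_lt.mp fun hyb => disjoint_left.mp hFab hy ⟨(hax.trans hxd).trans_le hdy, hyb⟩
  have hstab_f : f ∈ stabilizer Γ (F ∩ Ici b) := by
    rw [mem_stabilizer_iff, smul_set_inter, hstab, smul_Ici, hf.right]
  have hstab_g : g ∈ stabilizer Γ (F ∩ Ici b) := by
    rw [hIci, mem_stabilizer_iff, smul_set_inter, hstab, smul_Ici, hg.right]
  have hglb : IsGLB (F ∩ Ici b) (sInf (F ∩ Ici b)) :=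
    isGLB_csInf ⟨e, fun γ => he γ, hbe⟩ (bddBelow_Ici.mono inter_subset_right)
  refine ⟨sInf (F ∩ Ici b), mem_fixedPoints_of_closure_eq_top hgen ?_,
    hglb.2 fun y hy => hy.2, disjoint_left.mpr fun y hy hyB => ?_⟩
  · rintro γ (rfl | rfl)
    exacts [stabilizer_le_stabilizer_of_isGLB hglb hstab_f,
      stabilizer_le_stabilizer_of_isGLB hglb hstab_g]
  · have hby : b ≤ y := not_lt.mp fun hyb => disjoint_left.mp hFab hy ⟨hyB.1, hyb⟩
    exact (hglb.1 ⟨hy, hby⟩).not_gt hyB.2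

end Overlap

theorem isLUB_orbit_of_disjoint_fixedPoints {a B x : α} (hB : B ∈ fixedPoints Γ α)
    (hdisj : Disjoint (fixedPoints Γ α) (Ioo a B)) (hx : x ∈ Ioo a B) : IsLUB (orbit Γ x) B := by
  have hBub : B ∈ upperBounds (orbit Γ x) := by
    rintro _ ⟨γ, rfl⟩
    exact (smul_mono_right γ hx.2.le).trans_eq (hB γ)
  have hlub := isLUB_csSup (nonempty_orbit x) ⟨B, hBub⟩
  have hfix : sSup (orbit Γ x) ∈ fixedPoints Γ α := fun γ =>
    stabilizer_le_stabilizer_of_isLUB hlub (smul_orbit γ x)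
  have hlt : a < sSup (orbit Γ x) := hx.1.trans_le (hlub.1 (mem_orbit_self x))
  have heq : sSup (orbit Γ x) = B :=
    (hlub.2 hBub).eq_of_not_lt fun hltB => disjoint_left.mp hdisj hfix ⟨hlt, hltB⟩
  rwa [heq] at hlub

variable [TopologicalSpace α] [OrderTopology α] {a B : α}

theorem disjoint_fixedPoints_commutator_of_le_leftGermKernel {D : Subgroup Γ}
    (hgerm : D ≤ leftGermKernel Γ B) (hdisj : Disjoint (fixedPoints D α) (Ioo a B)) :
    Disjoint (fixedPoints ↥⁅D, D⁆ α) (Ioo a B) := by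
  refine disjoint_left.mpr fun x hx hxB => disjoint_left.mp hdisj (fun u => ?_) hxB
  have hB : B ∈ fixedPoints D α := fun v => (hgerm v.2).self_of_nhdsWithin self_mem_Iic
  have hlub : IsLUB (orbit D x) B := isLUB_orbit_of_disjoint_fixedPoints hB hdisj hxB
  obtain ⟨_, ⟨k, rfl⟩, hk⟩ :=
    ((hlub.frequently_mem (nonempty_orbit x)).and_eventually (hgerm u.2)).exists
  have hcomm := smul_comm_of_mem_fixedPoints_commutator u.2 k.2 hx
  exact smul_left_cancel k (hcomm.symm.trans hk)

theorem disjoint_fixedPoints_derivedSeries (hgerm : commutator Γ ≤ leftGermKernel Γ B)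
    (hdisj : Disjoint (fixedPoints (commutator Γ) α) (Ioo a B)) (n : ℕ) :
    Disjoint (fixedPoints (derivedSeries Γ (n + 1)) α) (Ioo a B) := by
  induction n with
  | zero => rwa [zero_add, derivedSeries_one]
  | succ n ih =>
    have hle : derivedSeries Γ (n + 1) ≤ commutator Γ :=
      (derivedSeries_antitone Γ (Nat.le_add_left 1 n)).trans_eq (derivedSeries_one Γ)
    exact disjoint_fixedPoints_commutator_of_le_leftGermKernel (hle.trans hgerm) ih

theorem not_isSolvable_of_disjoint_fixedPoints_commutator
    (hgerm : commutator Γ ≤ leftGermKernel Γ B)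
    (hdisj : Disjoint (fixedPoints (commutator Γ) α) (Ioo a B)) (hne : (Ioo a B).Nonempty) :
    ¬Group.IsSolvable Γ := by
  rintro ⟨n, hn⟩
  obtain ⟨x, hx⟩ := hne
  have hbot : derivedSeries Γ (n + 1) = ⊥ :=
    bot_unique ((derivedSeries_antitone Γ n.le_succ).trans_eq hn)
  refine disjoint_left.mp (disjoint_fixedPoints_derivedSeries hgerm hdisj n) (fun γ => ?_) hx
  rw [Subgroup.smul_def, (Subgroup.mem_bot.mp (hbot ▸ γ.2) : (γ : Γ) = 1), one_smul]

variable {f g : Γ} {b c d e : α}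

theorem IsBadOverlap.not_isSolvable_of_closure_eq_top (h : IsBadOverlap f g a b c d)
    (hgerm : HasCommutingLeftGerms Γ α) (hgen : Subgroup.closure {f, g} = ⊤) (hbe : b ≤ e)
    (he : e ∈ fixedPoints Γ α) : ¬Group.IsSolvable Γ := by
  obtain ⟨B, hB, hbB, hdisj⟩ := h.exists_disjoint_fixedPoints_commutator hgen hbe he
  obtain ⟨x, ⟨hax, hxb⟩, -⟩ := h.nonempty_inter
  exact not_isSolvable_of_disjoint_fixedPoints_commutator
    (hgerm.commutator_le_leftGermKernel hB) hdisj ⟨x, hax, hxb.trans_le hbB⟩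

theorem statement5_general (hgerm : HasCommutingLeftGerms Γ α) (h : IsBadOverlap f g a b c d)
    (hbe : b ≤ e) (hfe : f • e = e) (hge : g • e = e) : ¬Group.IsSolvable Γ := by
  intro hsolv
  let K := Subgroup.closure {f, g}
  have hfK : f ∈ K := Subgroup.subset_closure (mem_insert f {g})
  have hgK : g ∈ K := Subgroup.subset_closure (mem_insert_of_mem f rfl)
  have hgen : Subgroup.closure {(⟨f, hfK⟩ : K), ⟨g, hgK⟩} = ⊤ := by
    rw [← Subgroup.closure_closure_coe_preimage (k := {f, g})]
    congr 1
    ext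
    simp only [mem_insert_iff, mem_singleton_iff, mem_preimage, Subtype.ext_iff, K]
  have he : e ∈ fixedPoints K α :=
    mem_fixedPoints_of_closure_eq_top hgen (by rintro γ (rfl | rfl) <;> assumption)
  exact (h.subgroup hfK hgK).not_isSolvable_of_closure_eq_top (hgerm.subgroup K) hgen hbe he
    inferInstance

end OrderAction

section PiecewiseLinear

open Filter
open scoped Topology

theorem IsLocallyAffineAt.analyticAt {g : PermR} {x : ℝ} (h : IsLocallyAffineAt g x) :
    AnalyticAt ℝ (ap g) x := by
  obtain ⟨m, b, hg⟩ := h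
  exact AnalyticAt.congr (by fun_prop) (EventuallyEq.symm hg)

theorem exists_eqOn_affine_of_isPreconnected_s5 {g : PermR} {U : Set ℝ} (hU : IsPreconnected U)
    (hne : U.Nonempty) (hg : ∀ x ∈ U, IsLocallyAffineAt g x) :
    ∃ m b : ℝ, EqOn (ap g) (fun y => m * y + b) U := by
  obtain ⟨x, hx⟩ := hne
  obtain ⟨m, b, hxg⟩ := hg x hx
  exact ⟨m, b, AnalyticOnNhd.eqOn_of_preconnected_of_eventuallyEq
    (fun y hy => (hg y hy).analyticAt) (fun y _ => by fun_prop) hU hx hxg⟩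

namespace IsPL

variable {g : PermR}

theorem continuous (hg : IsPL g) : Continuous (ap g) :=
  hg.1.monotone.continuous_of_surjective g.unop.surjective

theorem isLocallyAffineAt_of_notMem_Icc (hg : IsPL g) {x : ℝ} (hx : x ∉ Icc 0 1) :
    IsLocallyAffineAt g x := by
  refine ⟨1, 0, ?_⟩
  filter_upwards [isClosed_Icc.isOpen_compl.mem_nhds hx] with y hy
  rw [one_mul, add_zero, hg.2.1 y fun h => hy (Ioo_subset_Icc_self h)]

theorem finite_setOf_not_isLocallyAffineAt_s5 (hg : IsPL g) :
    {x | ¬IsLocallyAffineAt g x}.Finite := by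
  refine (hg.2.2.union (toFinite {0, 1})).subset fun x hx => ?_
  have hxI : x ∈ Icc 0 1 := not_not.mp fun h => hx (hg.isLocallyAffineAt_of_notMem_Icc h)
  rw [← Ioo_union_both zero_le_one] at hxI
  exact hxI.imp_left fun h => ⟨h, hx⟩

theorem eventually_nhdsLE_eq_affine (hg : IsPL g) (x : ℝ) :
    ∃ m b : ℝ, ∀ᶠ y in 𝓝[≤] x, ap g y = m * y + b := by
  have haff : ∀ᶠ y in 𝓝[<] x, IsLocallyAffineAt g y := by
    filter_upwards [(nhdsLT_le_nhdsNE x).trans (nhdsNE_le_cofinite x)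
      hg.finite_setOf_not_isLocallyAffineAt_s5.compl_mem_cofinite] with y hy
    exact not_not.mp hy
  obtain ⟨t, htx, ht⟩ := (mem_nhdsLT_iff_exists_Ioo_subset).mp haff
  obtain ⟨m, b, heq⟩ :=
    exists_eqOn_affine_of_isPreconnected_s5 isPreconnected_Ioo (nonempty_Ioo.mpr htx) ht
  have heqc := heq.closure hg.continuous (by fun_prop)
  rw [closure_Ioo htx.ne] at heqc
  exact ⟨m, b, eventually_of_mem (Icc_mem_nhdsLE htx) heqc⟩

theorem eventually_nhdsLE_ap_comm {f : PermR} (hf : IsPL f) (hg : IsPL g) {x : ℝ}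
    (hfx : ap f x = x) (hgx : ap g x = x) :
    ∀ᶠ y in 𝓝[≤] x, ap f (ap g y) = ap g (ap f y) := by
  obtain ⟨m, b, hmb⟩ := hf.eventually_nhdsLE_eq_affine x
  obtain ⟨n, c, hnc⟩ := hg.eventually_nhdsLE_eq_affine x
  have htendsto {u : PermR} (hu : IsPL u) (hux : ap u x = x) :
      Tendsto (ap u) (𝓝[≤] x) (𝓝[≤] x) := by
    have hmaps : MapsTo (ap u) (Iic x) (Iic x) := fun y hy => (hu.1.monotone hy).trans_eq hux
    have htendsto := (hu.continuous.continuousWithinAt (x := x)).tendsto_nhdsWithin hmaps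
    rwa [hux] at htendsto
  have hfx' : m * x + b = x := (hmb.self_of_nhdsWithin self_mem_Iic).symm.trans hfx
  have hgx' : n * x + c = x := (hnc.self_of_nhdsWithin self_mem_Iic).symm.trans hgx
  filter_upwards [hmb, hnc, htendsto hf hfx hnc, htendsto hg hgx hmb] with y hfy hgy hgfy hfgy
  rw [hfgy, hgfy, hfy, hgy]
  linear_combination (m - 1) * hgx' - (n - 1) * hfx'

end IsPL

section Unop

open MulOpposite

theorem isSolvable_unop {H : Type*} [Group H] (G : Subgroup Hᵐᵒᵖ) [Group.IsSolvable G] :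
    Group.IsSolvable G.unop :=
  let invHom : G.unop →* G := MonoidHom.mk' (fun γ => ⟨op (γ : H)⁻¹, G.inv_mem γ.2⟩)
    fun γ δ => Subtype.ext (congrArg op (mul_inv_rev (γ : H) δ))
  Group.isSolvable_of_isSolvable_injective (f := invHom) fun _ _ h =>
    Subtype.ext (inv_injective (op_injective (congrArg Subtype.val h)))

variable {G : Subgroup PermR}

theorem IsOrbital.isFixedGap {g : PermR} {a b : ℝ} (h : IsOrbital g a b) (hg : g ∈ G) :
    IsFixedGap (⟨g.unop, hg⟩ : G.unop) a b :=
  ⟨not_not.mp h.2.2.1, not_not.mp h.2.2.2, h.2.1⟩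

theorem AdmitsBadOverlap.exists_isBadOverlap (h : AdmitsBadOverlap G) :
    ∃ f g : G.unop, ∃ a b c d : ℝ, IsBadOverlap f g a b c d := by
  obtain ⟨f, hf, g, hg, a, b, c, d, hfab, hgcd, hmeet, hne, hab, hcd⟩ := h
  exact ⟨⟨f.unop, hf⟩, ⟨g.unop, hg⟩, a, b, c, d, hfab.isFixedGap hf, hgcd.isFixedGap hg, hmeet,
    hne, hab, hcd⟩

theorem covariantClass_unop_smul_le (hPL : ∀ g ∈ G, IsPL g) :
    CovariantClass G.unop ℝ HSMul.hSMul LE.le :=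
  ⟨fun γ _ _ h => (hPL _ γ.2).1.monotone h⟩

theorem hasCommutingLeftGerms_unop (hPL : ∀ g ∈ G, IsPL g) : HasCommutingLeftGerms G.unop ℝ :=
  fun u v _ hu hv => (hPL _ u.2).eventually_nhdsLE_ap_comm (hPL _ v.2) hu hv

theorem unop_smul_max_one (hPL : ∀ g ∈ G, IsPL g) (γ : G.unop) (x : ℝ) :
    γ • max x 1 = max x 1 :=
  (hPL _ γ.2).2.1 (max x 1) fun h => h.2.not_ge (le_max_right x 1)

end Unop

end PiecewiseLinear

theorem statement5 (G : Subgroup PermR) (hPL : ∀ g ∈ G, IsPL g)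
    (hbad : AdmitsBadOverlap G) : ¬ IsSolvable ↥G := by
  intro (hsolv : Group.IsSolvable G)
  have := covariantClass_unop_smul_le hPL
  obtain ⟨f, g, a, b, c, d, h⟩ := hbad.exists_isBadOverlap
  exact statement5_general (hasCommutingLeftGerms_unop hPL) h (le_max_left b 1)
    (unop_smul_max_one hPL f b) (unop_smul_max_one hPL g b) (isSolvable_unop G)

end PLPaper
end
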